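/- Let W be any DMC with 0 < ν_min and set λ := √(ν_min/ν_max). Then for every ε ∈ (0,1): if ε ∈ (0, λ/(1+λ)], then limsup_{n→∞} (log M*_fb(n, ε) − nC)/√n ≤ √(ν_min)·Φ^{-1}((1/(2λ))·ε(1+λ)); and if ε ∈ (λ/(1+λ), 1), then limsup_{n→∞} (log M*_fb(n, ε) − nC)/√n ≤ √(ν_max)·Φ^{-1}((1/2)·[ε(1+λ) + (1−λ)]). -/

import Mathlib

open MeasureTheory Real Filter Set
open scoped BigOperators ENNReal Classical

noncomputable section

namespace Paper

variable {X Y : Type*} [Fintype X] [Fintype Y]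

/-- `P` is a probability mass function on the finite alphabet `X`. -/
def IsDist (P : X → ℝ) : Prop := (∀ x, 0 ≤ P x) ∧ ∑ x, P x = 1

/-- `W` is a discrete memoryless channel (a stochastic matrix). -/
def IsChannel (W : X → Y → ℝ) : Prop := ∀ x, IsDist (W x)

/-- `W` has no all-zero column. -/
def NoZeroColumn (W : X → Y → ℝ) : Prop := ∀ y, ∃ x, 0 < W x y

/-- Output distribution induced by input distribution `P` through `W`. -/
def outDist (P : X → ℝ) (W : X → Y → ℝ) (y : Y) : ℝ := ∑ x, P x * W x y

/-- Mutual information `I(P; W)` (in nats). -/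
def mutInfo (P : X → ℝ) (W : X → Y → ℝ) : ℝ :=
  ∑ x, ∑ y, P x * W x y * Real.log (W x y / outDist P W y)

/-- Shannon capacity `C`. -/
def capacity (W : X → Y → ℝ) : ℝ :=
  sSup {c | ∃ P, IsDist P ∧ mutInfo P W = c}

/-- The set of capacity-achieving input distributions `Π*`. -/
def capacityAchievers (W : X → Y → ℝ) : Set (X → ℝ) :=
  {P | IsDist P ∧ mutInfo P W = capacity W}

/-- The (unique) capacity-achieving output distribution `q*`. -/
def qStar (W : X → Y → ℝ) : Y → ℝ :=
  if h : (capacityAchievers W).Nonempty then outDist h.choose W else fun _ => 0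

/-- The information density `i*(x,y) = log (W(y|x)/q*(y))`. -/
def iStar (W : X → Y → ℝ) (x : X) (y : Y) : ℝ := Real.log (W x y / qStar W y)

/-- `ν_x = Var[i*(x,Y)]`, `Y ~ W(·|x)`. -/
def nu (W : X → Y → ℝ) (x : X) : ℝ :=
  ∑ y, W x y * (iStar W x y) ^ 2 - (∑ y, W x y * iStar W x y) ^ 2

/-- `V_min`. -/
def Vmin (W : X → Y → ℝ) : ℝ :=
  sInf {v | ∃ P ∈ capacityAchievers W, v = ∑ x, P x * nu W x}

/-- `V_max`. -/
def Vmax (W : X → Y → ℝ) : ℝ :=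
  sSup {v | ∃ P ∈ capacityAchievers W, v = ∑ x, P x * nu W x}

/-- `V_ε`. -/
def Veps (W : X → Y → ℝ) (ε : ℝ) : ℝ := if ε < 1/2 then Vmin W else Vmax W

/-- `ν_min = min_x ν_x`. -/
def numin (W : X → Y → ℝ) [Nonempty X] : ℝ := ⨅ x, nu W x

/-- `ν_max = max_x ν_x`. -/
def numax (W : X → Y → ℝ) [Nonempty X] : ℝ := ⨆ x, nu W x

/-- Average error probability of the feedback code `(enc, dec)` with `M` messages
and blocklength `n`. -/
def errProb (W : X → Y → ℝ) (n M : ℕ) (enc : Fin M → List Y → X)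
    (dec : (Fin n → Y) → Fin M) : ℝ :=
  (M : ℝ)⁻¹ * ∑ m : Fin M, ∑ y : Fin n → Y,
    (∏ k : Fin n, W (enc m ((List.ofFn y).take (k : ℕ))) (y k)) *
      (if dec y = m then 0 else 1)

/-- Minimum average error probability of `(n,R)` feedback codes. -/
def minErr (W : X → Y → ℝ) (n : ℕ) (R : ℝ) : ℝ :=
  sInf {e | ∃ enc dec, e = errProb W n ⌈Real.exp (n * R)⌉₊ enc dec}

/-- `M*_fb(n, ε)`. -/
def Mfb (W : X → Y → ℝ) (n : ℕ) (ε : ℝ) : ℝ :=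
  sSup {m | ∃ R : ℝ, m = (⌈Real.exp (n * R)⌉₊ : ℝ) ∧ minErr W n R ≤ ε}

/-- Standard Gaussian density `φ`. -/
def gpdf (u : ℝ) : ℝ := (Real.sqrt (2 * Real.pi))⁻¹ * Real.exp (-u ^ 2 / 2)

/-- Standard Gaussian CDF `Φ`. -/
def gcdf (t : ℝ) : ℝ := ∫ u in Set.Iic t, gpdf u

/-- Inverse Gaussian CDF `Φ⁻¹`. -/
def gcdfInv : ℝ → ℝ := Function.invFun gcdf

/-- The sequence `(log M*_fb(n,ε) - nC)/√n` whose liminf/limsup is the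
second-order coding rate with feedback. -/
def SOfb (W : X → Y → ℝ) (ε : ℝ) (n : ℕ) : ℝ :=
  (Real.log (Mfb W n ε) - n * capacity W) / Real.sqrt n

section Gaussian

open ProbabilityTheory

theorem gpdf_eq (u : ℝ) : gpdf u = gaussianPDFReal 0 1 u := by
  simp [gpdf, gaussianPDFReal]

theorem gpdf_pos (u : ℝ) : 0 < gpdf u := by
  unfold gpdf; positivity

theorem continuous_gpdf : Continuous gpdf := by
  unfold gpdf; fun_prop

theorem gpdf_neg (u : ℝ) : gpdf (-u) = gpdf u := by simp [gpdf]

theorem integrable_gpdf : Integrable gpdf := by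
  have : gpdf = gaussianPDFReal 0 1 := funext gpdf_eq
  rw [this]; exact integrable_gaussianPDFReal 0 1

theorem gcdf_eq_cdf (t : ℝ) : gcdf t = cdf (gaussianReal 0 1) t := by
  rw [cdf_eq_real, Measure.real, gaussianReal_apply_eq_integral 0 one_ne_zero,
    ENNReal.toReal_ofReal]
  · simp [gcdf, gpdf_eq]
  · exact integral_nonneg fun x => gaussianPDFReal_nonneg 0 1 x

theorem tendsto_gcdf_atTop : Tendsto gcdf atTop (nhds 1) := by
  rw [show gcdf = _ from funext gcdf_eq_cdf]; exact tendsto_cdf_atTop _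

theorem tendsto_gcdf_atBot : Tendsto gcdf atBot (nhds 0) := by
  rw [show gcdf = _ from funext gcdf_eq_cdf]; exact tendsto_cdf_atBot _

theorem hasDerivAt_gcdf (t : ℝ) : HasDerivAt gcdf (gpdf t) t := by
  have h : gcdf = fun s => gcdf 0 + ∫ u in (0 : ℝ)..s, gpdf u := by
    funext s
    have := intervalIntegral.integral_Iic_sub_Iic
      (integrable_gpdf.integrableOn (s := Iic (0 : ℝ))) (integrable_gpdf.integrableOn (s := Iic s))
    unfold gcdf; linarith
  rw [h]
  refine HasDerivAt.const_add _ ?_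
  exact intervalIntegral.integral_hasDerivAt_right (continuous_gpdf.intervalIntegrable _ _)
    (continuous_gpdf.stronglyMeasurableAtFilter _ _) continuous_gpdf.continuousAt

theorem continuous_gcdf : Continuous gcdf :=
  continuous_iff_continuousAt.2 fun t => (hasDerivAt_gcdf t).continuousAt

theorem strictMono_gcdf : StrictMono gcdf :=
  strictMono_of_deriv_pos fun t => by rw [(hasDerivAt_gcdf t).deriv]; exact gpdf_pos t

theorem gcdf_pos (t : ℝ) : 0 < gcdf t := by
  have h : 0 ≤ gcdf (t - 1) := by rw [gcdf_eq_cdf]; exact cdf_nonneg _ _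
  exact h.trans_lt (strictMono_gcdf (by linarith))

theorem gcdf_zero : gcdf 0 = 1 / 2 := by
  have h1 : gcdf 0 = ∫ u in Ioi (0 : ℝ), gpdf u := by
    have := integral_comp_neg_Iic (0 : ℝ) gpdf
    simpa [gpdf_neg, gcdf] using this
  have h2 : gcdf 0 + ∫ u in Ioi (0 : ℝ), gpdf u = 1 := by
    have := integral_add_compl (s := Iic (0 : ℝ)) measurableSet_Iic integrable_gpdf
    rw [compl_Iic] at this
    rw [gcdf, this]
    simp_rw [gpdf_eq]
    exact integral_gaussianPDFReal_eq_one 0 one_ne_zero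
  linarith

theorem gcdf_neg (t : ℝ) : gcdf (-t) = 1 - gcdf t := by
  have h : ∀ t, HasDerivAt (fun t => gcdf (-t) + gcdf t) 0 t := fun t => by
    refine (((hasDerivAt_gcdf (-t)).comp t (hasDerivAt_neg t)).add
      (hasDerivAt_gcdf t)).congr_deriv ?_
    rw [gpdf_neg]; ring
  have := is_const_of_deriv_eq_zero (fun t => (h t).differentiableAt) (fun t => (h t).deriv) t 0
  simp only [neg_zero, gcdf_zero] at this
  linarith

theorem gcdf_gcdfInv {p : ℝ} (h0 : 0 < p) (h1 : p < 1) : gcdf (gcdfInv p) = p := by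
  apply Function.invFun_eq
  exact mem_range_of_exists_le_of_exists_ge continuous_gcdf
    ((tendsto_gcdf_atBot.eventually (gt_mem_nhds h0)).exists.imp fun _ => le_of_lt)
    ((tendsto_gcdf_atTop.eventually (lt_mem_nhds h1)).exists.imp fun _ => le_of_lt)

theorem hasDerivAt_gpdf (u : ℝ) : HasDerivAt gpdf (-(u * gpdf u)) u := by
  unfold gpdf
  have h : HasDerivAt (fun u : ℝ => -u ^ 2 / 2) (-u) u := by
    refine (((hasDerivAt_pow 2 u).fun_neg).div_const 2).congr_deriv ?_
    simp; ring
  refine (h.exp.const_mul (Real.sqrt (2 * Real.pi))⁻¹).congr_deriv ?_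
  ring

theorem gpdf_le_exp (u : ℝ) : gpdf u ≤ Real.exp (-u ^ 2 / 2) := by
  unfold gpdf
  have : 1 ≤ Real.sqrt (2 * Real.pi) := by
    rw [Real.one_le_sqrt]; linarith [Real.pi_gt_three]
  exact mul_le_of_le_one_left (Real.exp_pos _).le (inv_le_one_of_one_le₀ this)

/-- All polynomial weights of degree at most four against the Gaussian density are bounded. -/
theorem gpdf_mul_le (u : ℝ) : (1 + u ^ 2 + u ^ 4) * gpdf u ≤ 11 := by
  have h := gpdf_le_exp u
  have h1 : 1 + u ^ 2 / 2 + (u ^ 2 / 2) ^ 2 / 2 ≤ Real.exp (u ^ 2 / 2) :=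
    Real.quadratic_le_exp_of_nonneg (by positivity)
  have h2 : Real.exp (u ^ 2 / 2) * Real.exp (-u ^ 2 / 2) = 1 := by
    rw [← Real.exp_add]; ring_nf; simp
  have h3 : (1 + u ^ 2 + u ^ 4) ≤ 11 * Real.exp (u ^ 2 / 2) := by nlinarith [sq_nonneg (u ^ 2)]
  calc (1 + u ^ 2 + u ^ 4) * gpdf u
      ≤ (11 * Real.exp (u ^ 2 / 2)) * Real.exp (-u ^ 2 / 2) := by
        apply mul_le_mul h3 h (gpdf_pos u).le (by positivity)
    _ = 11 := by rw [mul_assoc, h2, mul_one]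

end Gaussian

/-- If `F` and `H` have equal derivatives at `0`, gluing `F` on the left of `0` to `H` on the
right of `0` gives a differentiable function. -/
theorem hasDerivAt_glue {F H F' H' : ℝ → ℝ} (hF : ∀ z, HasDerivAt F (F' z) z)
    (hH : ∀ z, HasDerivAt H (H' z) z) (h0 : F' 0 = H' 0) (z : ℝ) :
    HasDerivAt (fun z => F (min z 0) + H (max z 0)) (F' (min z 0) + H' (max z 0) - F' 0) z := by
  rcases lt_trichotomy z 0 with hz | rfl | hz
  · have h : (fun z => F (min z 0) + H (max z 0)) =ᶠ[nhds z] fun z => F z + H 0 := by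
      filter_upwards [gt_mem_nhds hz] with y hy
      rw [min_eq_left hy.le, max_eq_right hy.le]
    rw [min_eq_left hz.le, max_eq_right hz.le, h0, add_sub_cancel_right]
    exact ((hF z).add_const _).congr_of_eventuallyEq h
  · have h1 : HasDerivWithinAt (fun z => F (min z 0) + H (max z 0)) (F' 0) (Iic 0) 0 :=
      ((hF 0).add_const (H 0)).hasDerivWithinAt.congr
        (fun y hy => by rw [min_eq_left (mem_Iic.1 hy), max_eq_right (mem_Iic.1 hy)]) (by simp)
    have h2 : HasDerivWithinAt (fun z => F (min z 0) + H (max z 0)) (F' 0) (Ici 0) 0 := by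
      rw [h0]
      exact ((hH 0).const_add (F 0)).hasDerivWithinAt.congr
        (fun y hy => by rw [min_eq_right (mem_Ici.1 hy), max_eq_left (mem_Ici.1 hy)]) (by simp)
    have h3 := h1.union h2
    rw [Iic_union_Ici, hasDerivWithinAt_univ] at h3
    simpa [h0] using h3
  · have h : (fun z => F (min z 0) + H (max z 0)) =ᶠ[nhds z] fun z => F 0 + H z := by
      filter_upwards [lt_mem_nhds hz] with y hy
      rw [min_eq_right hy.le, max_eq_left hy.le]
    rw [min_eq_right hz.le, max_eq_left hz.le, add_sub_cancel_left]
    exact ((hH z).const_add _).congr_of_eventuallyEq h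

theorem abs_sub_le_mul_abs_of_hasDerivAt {f f' : ℝ → ℝ} {K a b : ℝ}
    (hf : ∀ z, HasDerivAt f (f' z) z) (hK : ∀ z ∈ uIcc a b, |f' z| ≤ K) :
    |f b - f a| ≤ K * |b - a| := by
  have := (convex_uIcc a b).norm_image_sub_le_of_norm_hasDerivWithin_le
    (fun z _ => (hf z).hasDerivWithinAt) (fun z hz => by simpa using hK z hz)
    left_mem_uIcc right_mem_uIcc
  simpa using this

theorem abs_sub_taylor_one_le {f f' f'' : ℝ → ℝ} {K : ℝ}
    (hf : ∀ z, HasDerivAt f (f' z) z) (hf' : ∀ z, HasDerivAt f' (f'' z) z)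
    (hK : ∀ z, |f'' z| ≤ K) (h : ℝ) :
    |f h - f 0 - f' 0 * h| ≤ K * h ^ 2 := by
  have hK0 : 0 ≤ K := (abs_nonneg _).trans (hK 0)
  have hd : ∀ z, HasDerivAt (fun z => f z - f' 0 * z) (f' z - f' 0) z := fun z => by
    simpa using (hf z).fun_sub ((hasDerivAt_id z).const_mul (f' 0))
  have := abs_sub_le_mul_abs_of_hasDerivAt (a := 0) (b := h) (K := K * |h|) hd fun z hz => by
    refine (abs_sub_le_mul_abs_of_hasDerivAt hf' fun w _ => hK w).trans ?_
    have := abs_sub_left_of_mem_uIcc hz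
    exact mul_le_mul_of_nonneg_left (by simpa using this) hK0
  calc |f h - f 0 - f' 0 * h| = |f h - f' 0 * h - (f 0 - f' 0 * 0)| := by ring_nf
    _ ≤ K * |h| * |h - 0| := this
    _ = K * h ^ 2 := by rw [sub_zero, mul_assoc, abs_mul_abs_self]; ring

theorem abs_sub_taylor_two_le {f f' f'' : ℝ → ℝ} {L : ℝ}
    (hf : ∀ z, HasDerivAt f (f' z) z) (hf' : ∀ z, HasDerivAt f' (f'' z) z)
    (hL : ∀ z w, |f'' w - f'' z| ≤ L * |w - z|) (z h : ℝ) :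
    |f (z + h) - f z - f' z * h - f'' z * h ^ 2 / 2| ≤ L * |h| ^ 3 := by
  have hL0 : 0 ≤ L := by simpa using (abs_nonneg _).trans (hL 0 1)
  have habs : ∀ w ∈ uIcc 0 h, |w| ≤ |h| := fun w hw => by
    simpa using abs_sub_left_of_mem_uIcc hw
  have hadd : ∀ (φ φ' : ℝ → ℝ), (∀ y, HasDerivAt φ (φ' y) y) → ∀ y,
      HasDerivAt (fun y => φ (z + y)) (φ' (z + y)) y := fun φ φ' hφ y => by
    simpa using (hφ (z + y)).comp_const_add z y
  have h1 : ∀ y ∈ uIcc 0 h, |f' (z + y) - f' z - f'' z * y| ≤ L * |h| * |h| := fun y hy => by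
    have hd : ∀ w, HasDerivAt (fun w => f' (z + w) - f'' z * w) (f'' (z + w) - f'' z) w :=
      fun w => by
        simpa using (hadd f' f'' hf' w).fun_sub ((hasDerivAt_id w).const_mul (f'' z))
    have := abs_sub_le_mul_abs_of_hasDerivAt (a := 0) (b := y) (K := L * |h|) hd fun w hw => by
      refine (hL z (z + w)).trans ?_
      have : |w| ≤ |y| := by simpa using abs_sub_left_of_mem_uIcc hw
      exact mul_le_mul_of_nonneg_left (by simpa using this.trans (habs y hy)) hL0
    calc _ = |f' (z + y) - f'' z * y - (f' (z + 0) - f'' z * 0)| := by ring_nf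
      _ ≤ L * |h| * |y - 0| := this
      _ ≤ L * |h| * |h| :=
        mul_le_mul_of_nonneg_left (by simpa using habs y hy) (by positivity)
  have hd : ∀ w, HasDerivAt (fun w => f (z + w) - f' z * w - f'' z * w ^ 2 / 2)
      (f' (z + w) - f' z - f'' z * w) w := fun w => by
    refine (((hadd f f' hf w).fun_sub ((hasDerivAt_id w).const_mul (f' z))).fun_sub
      (((hasDerivAt_pow 2 w).const_mul (f'' z)).div_const 2)).congr_deriv ?_
    simp; ring
  have := abs_sub_le_mul_abs_of_hasDerivAt (a := 0) (b := h) hd h1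
  calc _ = |f (z + h) - f' z * h - f'' z * h ^ 2 / 2
        - (f (z + 0) - f' z * 0 - f'' z * 0 ^ 2 / 2)| := by ring_nf
    _ ≤ L * |h| * |h| * |h - 0| := this
    _ = L * |h| ^ 3 := by rw [sub_zero]; ring

/-- The value function, at unit horizon, of the control problem in which the volatility may be
chosen in `[s₁, s₂]` so as to maximize the probability of ending above `0`. -/
def valueFn (s₁ s₂ z : ℝ) : ℝ :=
  2 * s₂ / (s₁ + s₂) * gcdf (min z 0 / s₂) + 2 * s₁ / (s₁ + s₂) * (gcdf (max z 0 / s₁) - 1 / 2)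

/-- The first derivative of `valueFn`. -/
def valueDeriv (s₁ s₂ z : ℝ) : ℝ :=
  2 / (s₁ + s₂) * gpdf (min z 0 / s₂) + 2 / (s₁ + s₂) * gpdf (max z 0 / s₁)
    - 2 / (s₁ + s₂) * gpdf (0 / s₂)

/-- The second derivative of `valueFn`. -/
def valueDeriv₂ (s₁ s₂ z : ℝ) : ℝ :=
  -(2 / (s₁ + s₂) * (min z 0 / s₂ ^ 2 * gpdf (min z 0 / s₂)))
    + -(2 / (s₁ + s₂) * (max z 0 / s₁ ^ 2 * gpdf (max z 0 / s₁)))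

section ValueFn

variable {s₁ s₂ : ℝ}

theorem hasDerivAt_valueFn (h₁ : 0 < s₁) (h₂ : 0 < s₂) (z : ℝ) :
    HasDerivAt (valueFn s₁ s₂) (valueDeriv s₁ s₂ z) z := by
  refine hasDerivAt_glue (F := fun u => 2 * s₂ / (s₁ + s₂) * gcdf (u / s₂))
    (H := fun u => 2 * s₁ / (s₁ + s₂) * (gcdf (u / s₁) - 1 / 2))
    (F' := fun u => 2 / (s₁ + s₂) * gpdf (u / s₂)) (H' := fun u => 2 / (s₁ + s₂) * gpdf (u / s₁))
    (fun u => ?_) (fun u => ?_) (by simp) z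
  · refine (((hasDerivAt_gcdf (u / s₂)).comp u ((hasDerivAt_id u).div_const s₂)).const_mul
      _).congr_deriv ?_
    field_simp
  · refine ((((hasDerivAt_gcdf (u / s₁)).comp u ((hasDerivAt_id u).div_const s₁)).sub_const
      _).const_mul _).congr_deriv ?_
    field_simp

theorem hasDerivAt_gpdf_div (c s u : ℝ) :
    HasDerivAt (fun u => c * gpdf (u / s)) (-(c * (u / s ^ 2 * gpdf (u / s)))) u := by
  refine (((hasDerivAt_gpdf (u / s)).comp u ((hasDerivAt_id u).div_const s)).const_mul
      _).congr_deriv ?_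
  ring

theorem hasDerivAt_valueDeriv (z : ℝ) :
    HasDerivAt (valueDeriv s₁ s₂) (valueDeriv₂ s₁ s₂ z) z := by
  have := (hasDerivAt_glue (hasDerivAt_gpdf_div (2 / (s₁ + s₂)) s₂)
    (hasDerivAt_gpdf_div (2 / (s₁ + s₂)) s₁) (by simp) z).sub_const
    (2 / (s₁ + s₂) * gpdf (0 / s₂))
  refine this.congr_deriv ?_
  simp [valueDeriv₂]

/-- On either side of `0`, `valueDeriv` is a multiple of a single Gaussian density. -/
theorem valueDeriv_eq (s₁ s₂ z : ℝ) :
    ∃ s, (z ≤ 0 ∧ s = s₂ ∨ 0 ≤ z ∧ s = s₁) ∧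
      valueDeriv s₁ s₂ z = 2 / (s₁ + s₂) * gpdf (z / s) ∧
      valueDeriv₂ s₁ s₂ z = -(2 / (s₁ + s₂) * (z / s ^ 2 * gpdf (z / s))) := by
  rcases le_total z 0 with hz | hz
  · exact ⟨s₂, .inl ⟨hz, rfl⟩, by simp [valueDeriv, hz], by simp [valueDeriv₂, hz]⟩
  · exact ⟨s₁, .inr ⟨hz, rfl⟩, by simp [valueDeriv, hz], by simp [valueDeriv₂, hz]⟩

theorem valueDeriv_nonneg (h₁ : 0 < s₁) (h₂ : 0 < s₂) (z : ℝ) : 0 ≤ valueDeriv s₁ s₂ z := by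
  obtain ⟨s, -, h, -⟩ := valueDeriv_eq s₁ s₂ z
  rw [h]
  have := gpdf_pos (z / s)
  positivity

theorem strictMono_valueFn (h₁ : 0 < s₁) (h₂ : 0 < s₂) : StrictMono (valueFn s₁ s₂) :=
  strictMono_of_deriv_pos fun z => by
    rw [(hasDerivAt_valueFn h₁ h₂ z).deriv]
    obtain ⟨s, -, h, -⟩ := valueDeriv_eq s₁ s₂ z
    rw [h]
    have := gpdf_pos (z / s)
    positivity

theorem continuous_valueFn (h₁ : 0 < s₁) (h₂ : 0 < s₂) : Continuous (valueFn s₁ s₂) :=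
  continuous_iff_continuousAt.2 fun z => (hasDerivAt_valueFn h₁ h₂ z).continuousAt

theorem valueFn_of_nonpos {z : ℝ} (hz : z ≤ 0) :
    valueFn s₁ s₂ z = 2 * s₂ / (s₁ + s₂) * gcdf (z / s₂) := by
  simp [valueFn, hz, gcdf_zero]

theorem valueFn_of_nonneg (h₁ : 0 < s₁) (h₂ : 0 < s₂) {z : ℝ} (hz : 0 ≤ z) :
    valueFn s₁ s₂ z = 1 - 2 * s₁ / (s₁ + s₂) * (1 - gcdf (z / s₁)) := by
  simp only [valueFn, hz, min_eq_right, max_eq_left, zero_div, gcdf_zero]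
  field_simp
  ring

theorem valueFn_pos (h₁ : 0 < s₁) (h₂ : 0 < s₂) (z : ℝ) : 0 < valueFn s₁ s₂ z := by
  have h : 0 < valueFn s₁ s₂ (min z 0) := by
    rw [valueFn_of_nonpos (min_le_right _ _)]
    have := gcdf_pos (min z 0 / s₂)
    positivity
  exact h.trans_le ((strictMono_valueFn h₁ h₂).monotone (min_le_left _ _))

theorem tendsto_valueFn_atTop (h₁ : 0 < s₁) (h₂ : 0 < s₂) :
    Tendsto (valueFn s₁ s₂) atTop (nhds 1) := by
  have h : Tendsto (fun z => 1 - 2 * s₁ / (s₁ + s₂) * (1 - gcdf (z / s₁))) atTop (nhds 1) := by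
    have := ((tendsto_gcdf_atTop.comp (tendsto_id.atTop_div_const h₁)).const_sub 1).const_mul
      (2 * s₁ / (s₁ + s₂))
    simpa using this.const_sub 1
  refine h.congr' ?_
  filter_upwards [eventually_ge_atTop 0] with z hz using (valueFn_of_nonneg h₁ h₂ hz).symm

/-- The Hamilton-Jacobi-Bellman inequality in self-similar form. -/
theorem mul_valueDeriv₂_le (h₁ : 0 < s₁) (h₂ : 0 < s₂) {ν : ℝ} (hν₁ : s₁ ^ 2 ≤ ν)
    (hν₂ : ν ≤ s₂ ^ 2) (z : ℝ) :
    ν * valueDeriv₂ s₁ s₂ z ≤ -(z * valueDeriv s₁ s₂ z) := by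
  obtain ⟨s, hs, h, h'⟩ := valueDeriv_eq s₁ s₂ z
  have hs0 : 0 < s := by rcases hs with ⟨-, rfl⟩ | ⟨-, rfl⟩ <;> assumption
  have hc : 0 ≤ 2 / (s₁ + s₂) * gpdf (z / s) := h ▸ valueDeriv_nonneg h₁ h₂ z
  have key : 0 ≤ z * (ν / s ^ 2 - 1) := by
    rcases hs with ⟨hz, rfl⟩ | ⟨hz, rfl⟩
    · exact mul_nonneg_of_nonpos_of_nonpos hz (by
        rw [sub_nonpos, div_le_one (by positivity)]; exact hν₂)
    · exact mul_nonneg hz (by rw [sub_nonneg, one_le_div (by positivity)]; exact hν₁)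
  rw [h, h']
  have := mul_nonneg key hc
  have e : ν * -(2 / (s₁ + s₂) * (z / s ^ 2 * gpdf (z / s))) =
    -(z * (2 / (s₁ + s₂) * gpdf (z / s))) - z * (ν / s ^ 2 - 1) * (2 / (s₁ + s₂) * gpdf (z / s)) := by
    ring
  linarith

theorem abs_pow_mul_gpdf_le (u : ℝ) : |u| * gpdf u ≤ 11 ∧ |u| ^ 2 * gpdf u ≤ 11 ∧
    |u| ^ 3 * gpdf u ≤ 11 := by
  have h := gpdf_mul_le u
  have h0 := gpdf_pos u
  rw [← sq_abs u, show u ^ 4 = |u| ^ 4 from (Even.pow_abs ⟨2, rfl⟩ u).symm] at h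
  have ha := abs_nonneg u
  refine ⟨le_trans ?_ h, le_trans ?_ h, le_trans ?_ h⟩ <;>
    refine mul_le_mul_of_nonneg_right ?_ h0.le
  · nlinarith [sq_nonneg (|u| - 1), sq_nonneg (|u| ^ 2)]
  · nlinarith [sq_nonneg (|u| - 1), sq_nonneg (|u| ^ 2)]
  · nlinarith [sq_nonneg (|u| - 1), sq_nonneg (|u| ^ 2), sq_nonneg (|u| ^ 2 - |u|)]

theorem abs_valueDeriv_bounds (h₁ : 0 < s₁) (h₂ : 0 < s₂) (z : ℝ) :
    |z * valueDeriv s₁ s₂ z| ≤ 44 ∧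
      |z * valueDeriv s₁ s₂ z + z ^ 2 * valueDeriv₂ s₁ s₂ z| ≤ 44 := by
  obtain ⟨s, hs, h, h'⟩ := valueDeriv_eq s₁ s₂ z
  have hs0 : 0 < s := by rcases hs with ⟨-, rfl⟩ | ⟨-, rfl⟩ <;> assumption
  have hs2 : 2 / (s₁ + s₂) * s ≤ 2 := by
    rw [div_mul_eq_mul_div, div_le_iff₀ (by positivity)]
    rcases hs with ⟨-, rfl⟩ | ⟨-, rfl⟩ <;> linarith
  obtain ⟨u, rfl⟩ : ∃ u, z = s * u := ⟨z / s, by field_simp⟩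
  rw [h, h', mul_div_cancel_left₀ u hs0.ne']
  obtain ⟨b1, -, b3⟩ := abs_pow_mul_gpdf_le u
  have hg := gpdf_pos u
  set c := 2 / (s₁ + s₂) * s with hc
  have hc0 : 0 ≤ c := by positivity
  have e1 : s * u * (2 / (s₁ + s₂) * gpdf u) = c * (u * gpdf u) := by rw [hc]; ring
  have e2 : (s * u) ^ 2 * -(2 / (s₁ + s₂) * (s * u / s ^ 2 * gpdf u)) = -(c * (u ^ 3 * gpdf u)) := by
    rw [hc]; field_simp
  have a1 : |c * (u * gpdf u)| ≤ 22 := by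
    rw [abs_mul c, abs_mul u, abs_of_nonneg hc0, abs_of_pos hg]
    calc c * (|u| * gpdf u) ≤ 2 * 11 := by gcongr
      _ = 22 := by norm_num
  have a2 : |-(c * (u ^ 3 * gpdf u))| ≤ 22 := by
    rw [abs_neg, abs_mul c, abs_mul (u ^ 3), abs_of_nonneg hc0, abs_of_pos hg, abs_pow]
    calc c * (|u| ^ 3 * gpdf u) ≤ 2 * 11 := by gcongr
      _ = 22 := by norm_num
  rw [e1, e2]
  exact ⟨a1.trans (by norm_num), (abs_add_le _ _).trans (by linarith)⟩

theorem exists_lipschitz_gpdf_div (c : ℝ) {s : ℝ} (hs : 0 < s) :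
    ∃ L, 0 ≤ L ∧ ∀ z w, |-(c * (w / s ^ 2 * gpdf (w / s))) - -(c * (z / s ^ 2 * gpdf (z / s)))| ≤
      L * |w - z| := by
  refine ⟨|c| / s ^ 2 * 22, by positivity, fun z w => ?_⟩
  refine abs_sub_le_mul_abs_of_hasDerivAt (f := fun u => -(c * (u / s ^ 2 * gpdf (u / s))))
    (f' := fun u => -(c / s ^ 2 * (gpdf (u / s) - (u / s) ^ 2 * gpdf (u / s)))) (fun u => ?_)
    fun u _ => ?_
  · refine (((((hasDerivAt_id u).div_const (s ^ 2)).mul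
      ((hasDerivAt_gpdf (u / s)).comp u ((hasDerivAt_id u).div_const s))).const_mul
      c).neg).congr_deriv ?_
    simp
    field_simp
    ring
  · have hg := gpdf_pos (u / s)
    have h0 := (abs_pow_mul_gpdf_le (u / s)).2.1
    have h1 : gpdf (u / s) ≤ 11 := by
      have := gpdf_mul_le (u / s)
      have : 0 ≤ (u / s) ^ 2 * gpdf (u / s) + (u / s) ^ 4 * gpdf (u / s) := by positivity
      linarith
    rw [sq_abs] at h0
    rw [abs_neg, abs_mul, abs_div, abs_of_pos (show 0 < s ^ 2 by positivity)]
    refine mul_le_mul_of_nonneg_left ?_ (by positivity)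
    rw [abs_le]
    have : 0 ≤ (u / s) ^ 2 * gpdf (u / s) := by positivity
    constructor <;> linarith

theorem exists_lipschitz_valueDeriv₂ (h₁ : 0 < s₁) (h₂ : 0 < s₂) :
    ∃ L, 0 ≤ L ∧ ∀ z w, |valueDeriv₂ s₁ s₂ w - valueDeriv₂ s₁ s₂ z| ≤ L * |w - z| := by
  obtain ⟨L₁, hL₁, H₁⟩ := exists_lipschitz_gpdf_div (2 / (s₁ + s₂)) h₁
  obtain ⟨L₂, hL₂, H₂⟩ := exists_lipschitz_gpdf_div (2 / (s₁ + s₂)) h₂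
  refine ⟨L₂ + L₁, by positivity, fun z w => ?_⟩
  unfold valueDeriv₂
  rw [add_sub_add_comm, add_mul]
  refine (abs_add_le _ _).trans (add_le_add ((H₂ _ _).trans ?_) ((H₁ _ _).trans ?_))
  · have := abs_min_sub_min_le_max w 0 z 0
    exact mul_le_mul_of_nonneg_left (by simpa using this) hL₂
  · have := abs_max_sub_max_le_max w 0 z 0
    exact mul_le_mul_of_nonneg_left (by simpa using this) hL₁

theorem valueFn_taylor_exp (h₁ : 0 < s₁) (h₂ : 0 < s₂) (z τ : ℝ) :
    valueFn s₁ s₂ z - z * valueDeriv s₁ s₂ z * τ - 44 * τ ^ 2 ≤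
      valueFn s₁ s₂ (z * Real.exp (-τ)) := by
  have he : ∀ t, HasDerivAt (fun t => z * Real.exp (-t)) (-(z * Real.exp (-t))) t := fun t => by
    refine (((hasDerivAt_neg t).exp).const_mul z).congr_deriv ?_
    ring
  have hd : ∀ t, HasDerivAt (fun t => valueFn s₁ s₂ (z * Real.exp (-t)))
      (-(z * Real.exp (-t) * valueDeriv s₁ s₂ (z * Real.exp (-t)))) t := fun t => by
    refine ((hasDerivAt_valueFn h₁ h₂ _).comp t (he t)).congr_deriv ?_
    ring
  have hd' : ∀ t, HasDerivAt
      (fun t => -(z * Real.exp (-t) * valueDeriv s₁ s₂ (z * Real.exp (-t))))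
      (z * Real.exp (-t) * valueDeriv s₁ s₂ (z * Real.exp (-t)) +
        (z * Real.exp (-t)) ^ 2 * valueDeriv₂ s₁ s₂ (z * Real.exp (-t))) t := fun t => by
    refine (((he t).mul ((hasDerivAt_valueDeriv _).comp t (he t))).neg).congr_deriv ?_
    simp; ring
  have := (abs_le.1 (abs_sub_taylor_one_le hd hd' (K := 44)
    (fun t => (abs_valueDeriv_bounds h₁ h₂ _).2) τ)).1
  simp only [neg_zero, Real.exp_zero, mul_one] at this
  linarith

theorem exists_valueFn_step (h₁ : 0 < s₁) (h₂ : 0 < s₂) (B : ℝ) (hB : 0 ≤ B) :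
    ∃ K, 0 ≤ K ∧ ∀ {ι : Type*} [Fintype ι] (w ξ : ι → ℝ), (∀ i, 0 ≤ w i) → ∑ i, w i = 1 →
      (∀ i, w i ≠ 0 → |ξ i| ≤ B) → ∑ i, w i * ξ i ≤ 0 →
      s₁ ^ 2 ≤ ∑ i, w i * ξ i ^ 2 - (∑ i, w i * ξ i) ^ 2 →
      ∑ i, w i * ξ i ^ 2 - (∑ i, w i * ξ i) ^ 2 ≤ s₂ ^ 2 →
      ∀ x u : ℝ, 1 ≤ u → ∑ i, w i * valueFn s₁ s₂ ((x + ξ i) / u) ≤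
        valueFn s₁ s₂ (x / Real.sqrt (u ^ 2 + 1)) + K / u ^ 3 := by
  obtain ⟨L, hL, hLip⟩ := exists_lipschitz_valueDeriv₂ h₁ h₂
  refine ⟨L * (2 * B) ^ 3 + 33, by positivity, ?_⟩
  intro ι _ w ξ hw hw1 hξ hμ hν₁ hν₂ x u hu
  set μ := ∑ i, w i * ξ i with hμdef
  set ν := ∑ i, w i * ξ i ^ 2 - μ ^ 2 with hν
  have hu0 : 0 < u := by linarith
  have hμB : |μ| ≤ B := by
    calc |μ| ≤ ∑ i, |w i * ξ i| := Finset.abs_sum_le_sum_abs _ _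
      _ ≤ ∑ i, w i * B := Finset.sum_le_sum fun i _ => by
        rw [abs_mul, abs_of_nonneg (hw i)]
        by_cases h : w i = 0
        · simp [h]
        · exact mul_le_mul_of_nonneg_left (hξ i h) (hw i)
      _ = B := by rw [← Finset.sum_mul, hw1, one_mul]
  set z := x / u with hz
  set a := valueFn s₁ s₂ z with ha
  set b := valueDeriv s₁ s₂ z with hb
  set c := valueDeriv₂ s₁ s₂ z with hc
  have hstep : ∀ i, w i * valueFn s₁ s₂ ((x + ξ i) / u) ≤
      w i * (a + b * ((ξ i - μ) / u) + c * ((ξ i - μ) / u) ^ 2 / 2 + L * (2 * B / u) ^ 3) := by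
    intro i
    by_cases h : w i = 0
    · simp [h]
    refine mul_le_mul_of_nonneg_left ?_ (hw i)
    have hmono : valueFn s₁ s₂ ((x + ξ i) / u) ≤ valueFn s₁ s₂ (z + (ξ i - μ) / u) := by
      apply (strictMono_valueFn h₁ h₂).monotone
      rw [hz, ← add_div]
      gcongr
      linarith
    have ht := (abs_le.1 (abs_sub_taylor_two_le (hasDerivAt_valueFn h₁ h₂)
      hasDerivAt_valueDeriv hLip z ((ξ i - μ) / u))).2
    have habs : |(ξ i - μ) / u| ≤ 2 * B / u := by
      rw [abs_div, abs_of_pos hu0]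
      gcongr
      have h1 := abs_le.1 (hξ i h)
      have h2 := abs_le.1 hμB
      rw [abs_le]; constructor <;> linarith
    have : L * |(ξ i - μ) / u| ^ 3 ≤ L * (2 * B / u) ^ 3 := by gcongr
    linarith
  have hsum : ∑ i, w i * (a + b * ((ξ i - μ) / u) + c * ((ξ i - μ) / u) ^ 2 / 2 +
      L * (2 * B / u) ^ 3) = a + c * ν / (2 * u ^ 2) + L * (2 * B / u) ^ 3 := by
    have e : ∀ i, w i * (a + b * ((ξ i - μ) / u) + c * ((ξ i - μ) / u) ^ 2 / 2 +
        L * (2 * B / u) ^ 3) = w i * (a + L * (2 * B / u) ^ 3 - b * μ / u + c * μ ^ 2 / (2 * u ^ 2))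
          + w i * ξ i * (b / u - c * μ / u ^ 2) + w i * ξ i ^ 2 * (c / (2 * u ^ 2)) := fun i => by
      field_simp
      ring
    rw [Finset.sum_congr rfl fun i _ => e i, Finset.sum_add_distrib, Finset.sum_add_distrib,
      ← Finset.sum_mul, ← Finset.sum_mul, ← Finset.sum_mul, hw1, ← hμdef,
      show ∑ i, w i * ξ i ^ 2 = ν + μ ^ 2 by rw [hν]; ring]
    field_simp
    ring
  have hode := mul_valueDeriv₂_le h₁ h₂ hν₁ hν₂ z
  set τ := Real.log (1 + 1 / u ^ 2) / 2 with hτ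
  have hu2 : 1 ≤ u ^ 2 := one_le_pow₀ hu
  have hpos : 0 < 1 + 1 / u ^ 2 := by positivity
  have hτ0 : 0 ≤ τ := div_nonneg (Real.log_nonneg (by
    have : 0 ≤ 1 / u ^ 2 := by positivity
    linarith)) (by norm_num)
  have hτ1 : τ ≤ 1 / u ^ 2 / 2 := by
    have := Real.log_le_sub_one_of_pos hpos
    rw [hτ]; linarith
  have hτ2 : 1 / u ^ 2 / 2 - (1 / u ^ 2) ^ 2 / 2 ≤ τ := by
    have h := Real.one_sub_inv_le_log_of_pos hpos
    have : 1 / u ^ 2 - (1 / u ^ 2) ^ 2 ≤ 1 - (1 + 1 / u ^ 2)⁻¹ := by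
      set r := 1 / u ^ 2
      have hr : 0 ≤ r := by positivity
      have : (1 + r)⁻¹ ≤ 1 - r + r ^ 2 := by
        rw [inv_le_iff_one_le_mul₀ hpos]
        nlinarith [pow_nonneg hr 3]
      linarith
    rw [hτ]; linarith
  have hexp : z * Real.exp (-τ) = x / Real.sqrt (u ^ 2 + 1) := by
    have h1 : Real.exp τ = Real.sqrt (u ^ 2 + 1) / u := by
      rw [hτ, Real.exp_half, Real.exp_log hpos, eq_div_iff hu0.ne',
        show u ^ 2 + 1 = (1 + 1 / u ^ 2) * u ^ 2 by field_simp, Real.sqrt_mul hpos.le,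
        Real.sqrt_sq hu0.le]
    have : 0 < Real.sqrt (u ^ 2 + 1) := by positivity
    rw [Real.exp_neg, h1, hz]
    field_simp
  have ht := valueFn_taylor_exp h₁ h₂ z τ
  rw [hexp] at ht
  have hzb := (abs_le.1 (abs_valueDeriv_bounds h₁ h₂ z).1)
  refine (Finset.sum_le_sum fun i _ => hstep i).trans ?_
  rw [hsum]
  set r := 1 / u ^ 2 with hr
  have hr0 : 0 ≤ r := by positivity
  have hcν : c * ν / (2 * u ^ 2) ≤ -(z * b) * (r / 2) := by
    calc c * ν / (2 * u ^ 2) = ν * c * (r / 2) := by rw [hr]; field_simp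
      _ ≤ _ := mul_le_mul_of_nonneg_right hode (by positivity)
  have hr3 : r ^ 2 ≤ 1 / u ^ 3 := by
    rw [hr, div_pow, one_pow, ← pow_mul]
    exact one_div_le_one_div_of_le (by positivity) (pow_le_pow_right₀ hu (by norm_num))
  have hτsq : τ ^ 2 ≤ r ^ 2 / 4 := by
    calc τ ^ 2 ≤ (r / 2) ^ 2 := by gcongr
      _ = r ^ 2 / 4 := by ring
  have hdiff : z * b * (τ - r / 2) ≤ 44 * (r ^ 2 / 2) := by
    calc z * b * (τ - r / 2) ≤ |z * b * (τ - r / 2)| := le_abs_self _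
      _ = |z * b| * |τ - r / 2| := abs_mul _ _
      _ ≤ 44 * (r ^ 2 / 2) := by
        apply mul_le_mul (abs_valueDeriv_bounds h₁ h₂ z).1 _ (abs_nonneg _) (by norm_num)
        rw [abs_le]; constructor <;> linarith [sq_nonneg r]
  have hK : (L * (2 * B) ^ 3 + 33) / u ^ 3 = L * (2 * B / u) ^ 3 + 33 * (1 / u ^ 3) := by
    field_simp
  rw [hK]
  nlinarith

end ValueFn

section Saddle

theorem outDist_nonneg {X Y : Type*} [Fintype X] [Fintype Y] {W : X → Y → ℝ} (hW : IsChannel W)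
    {P : X → ℝ} (hP : IsDist P) (y : Y) : 0 ≤ outDist P W y :=
  Finset.sum_nonneg fun x _ => mul_nonneg (hP.1 x) ((hW x).1 y)

theorem sum_outDist {X Y : Type*} [Fintype X] [Fintype Y] {W : X → Y → ℝ} (hW : IsChannel W)
    {P : X → ℝ} (hP : IsDist P) : ∑ y, outDist P W y = 1 := by
  unfold outDist
  rw [Finset.sum_comm]
  simp_rw [← Finset.mul_sum, (hW _).2, mul_one]
  exact hP.2

theorem mul_le_outDist {X Y : Type*} [Fintype X] [Fintype Y] {W : X → Y → ℝ} (hW : IsChannel W)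
    {P : X → ℝ} (hP : IsDist P) (x : X) (y : Y) : P x * W x y ≤ outDist P W y :=
  Finset.single_le_sum (f := fun x => P x * W x y)
    (fun x _ => mul_nonneg (hP.1 x) ((hW x).1 y)) (Finset.mem_univ x)

theorem IsDist.le_one {X : Type*} [Fintype X] {P : X → ℝ} (hP : IsDist P) (x : X) : P x ≤ 1 :=
  hP.2 ▸ Finset.single_le_sum (fun x _ => hP.1 x) (Finset.mem_univ x)

theorem bddAbove_mutInfo {X Y : Type*} [Fintype X] [Fintype Y] {W : X → Y → ℝ}
    (hW : IsChannel W) : BddAbove {c | ∃ P, IsDist P ∧ mutInfo P W = c} := by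
  refine ⟨∑ _x : X, ∑ _y : Y, 1, ?_⟩
  rintro c ⟨P, hP, rfl⟩
  refine Finset.sum_le_sum fun x _ => Finset.sum_le_sum fun y _ => ?_
  rcases (hP.1 x).eq_or_lt with hx | hx
  · simp [← hx]
  rcases ((hW x).1 y).eq_or_lt with hy | hy
  · simp [← hy]
  have hq := mul_le_outDist hW hP x y
  have hpw := mul_pos hx hy
  have h1 : Real.log (W x y / outDist P W y) ≤ (P x)⁻¹ := by
    refine (Real.log_le_self (div_nonneg hy.le (hpw.trans_le hq).le)).trans ?_
    rw [div_le_iff₀ (hpw.trans_le hq), ← div_eq_inv_mul, le_div_iff₀ hx, mul_comm]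
    exact hq
  calc P x * W x y * Real.log (W x y / outDist P W y) ≤ P x * W x y * (P x)⁻¹ := by gcongr
    _ = W x y := by field_simp
    _ ≤ 1 := (hW x).le_one y

/-- Gibbs' inequality, termwise. -/
theorem sub_le_mul_log_div {a b : ℝ} (ha : 0 ≤ a) (hb : 0 ≤ b) (hab : a ≠ 0 → b ≠ 0) :
    a - b ≤ a * Real.log (a / b) := by
  rcases ha.eq_or_lt with rfl | ha
  · simpa using hb
  have hb' : 0 < b := lt_of_le_of_ne hb (hab ha.ne').symm
  have := mul_le_mul_of_nonneg_left (Real.one_sub_inv_le_log_of_pos (div_pos ha hb')) ha.le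
  refine le_trans (le_of_eq ?_) this
  field_simp

theorem mutInfo_le_capacity {X Y : Type*} [Fintype X] [Fintype Y] {W : X → Y → ℝ}
    (hW : IsChannel W) {P : X → ℝ} (hP : IsDist P) : mutInfo P W ≤ capacity W :=
  le_csSup (bddAbove_mutInfo hW) ⟨P, hP, rfl⟩

theorem mutInfo_le_cross {X Y : Type*} [Fintype X] [Fintype Y] {W : X → Y → ℝ}
    (hW : IsChannel W) {P : X → ℝ} (hP : IsDist P) {r : Y → ℝ} (hr : ∀ y, 0 ≤ r y)
    (hr1 : ∑ y, r y = 1) (hac : ∀ y, outDist P W y ≠ 0 → r y ≠ 0) :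
    mutInfo P W ≤ ∑ x, P x * ∑ y, W x y * Real.log (W x y / r y) := by
  have h : ∀ y, outDist P W y - r y ≤
      ∑ x, (P x * W x y * Real.log (W x y / r y) -
        P x * W x y * Real.log (W x y / outDist P W y)) := fun y => by
    refine (sub_le_mul_log_div (outDist_nonneg hW hP y) (hr y) (hac y)).trans (le_of_eq ?_)
    conv_lhs => rw [outDist, Finset.sum_mul]
    refine Finset.sum_congr rfl fun x _ => ?_
    by_cases h : P x * W x y = 0
    · simp [h]
    have h0 : 0 < P x * W x y := lt_of_le_of_ne (mul_nonneg (hP.1 x) ((hW x).1 y)) (Ne.symm h)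
    have hq := h0.trans_le (mul_le_outDist hW hP x y)
    have hw : W x y ≠ 0 := right_ne_zero_of_mul h
    rw [← outDist, Real.log_div hw (hac y hq.ne'), Real.log_div hw hq.ne',
      Real.log_div hq.ne' (hac y hq.ne')]
    ring
  have h2 := Finset.sum_le_sum fun y (_ : y ∈ Finset.univ) => h y
  rw [Finset.sum_sub_distrib, sum_outDist hW hP, hr1, sub_self, Finset.sum_comm] at h2
  simp only [Finset.sum_sub_distrib] at h2
  unfold mutInfo
  simp only [Finset.mul_sum, ← mul_assoc]
  linarith

theorem divergence_mixture_le_capacity {X Y : Type*} [Fintype X] [Fintype Y] {W : X → Y → ℝ}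
    (hW : IsChannel W) {P : X → ℝ} (hP : P ∈ capacityAchievers W) (x : X) {t : ℝ}
    (h0 : 0 < t) (h1 : t < 1) :
    ∑ y, W x y * Real.log (W x y / ((1 - t) * outDist P W y + t * W x y)) ≤ capacity W := by
  obtain ⟨hP, hPC⟩ := hP
  set Pt : X → ℝ := fun x' => (1 - t) * P x' + t * (if x' = x then 1 else 0) with hPt
  have h1t : 0 < 1 - t := by linarith
  have hPtd : IsDist Pt := by
    refine ⟨fun x' => ?_, ?_⟩
    · have := hP.1 x'
      simp only [hPt]
      split_ifs <;> positivity
    · simp [hPt, Finset.sum_add_distrib, ← Finset.mul_sum, hP.2]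
  have hout : ∀ y, outDist Pt W y = (1 - t) * outDist P W y + t * W x y := fun y => by
    simp [outDist, hPt, add_mul, Finset.sum_add_distrib, Finset.mul_sum, mul_assoc]
  have hI : mutInfo Pt W = (1 - t) * ∑ x', P x' * ∑ y, W x' y * Real.log (W x' y / outDist Pt W y)
      + t * ∑ y, W x y * Real.log (W x y / outDist Pt W y) := by
    simp [mutInfo, mul_assoc, ← Finset.mul_sum]
    simp [hPt, add_mul, Finset.sum_add_distrib, Finset.mul_sum, mul_assoc]
  have hcross := mutInfo_le_cross hW hP (fun y => outDist_nonneg hW hPtd y)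
    (sum_outDist hW hPtd) fun y hy => by
      have := lt_of_le_of_ne (outDist_nonneg hW hP y) hy.symm
      have h2 := (hW x).1 y
      rw [hout]
      positivity
  have hle := mutInfo_le_capacity hW hPtd
  rw [hI] at hle
  simp only [hout] at hle hcross
  rw [hPC] at hcross
  nlinarith

theorem outDist_pos_of_pos {X Y : Type*} [Fintype X] [Fintype Y] {W : X → Y → ℝ}
    (hW : IsChannel W) {P : X → ℝ} (hP : P ∈ capacityAchievers W) {x : X} {y : Y}
    (hxy : 0 < W x y) : 0 < outDist P W y := by
  refine lt_of_le_of_ne (outDist_nonneg hW hP.1 y) fun hq => ?_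
  set t := Real.exp (-((|capacity W| + 2) / W x y)) with ht
  have ht0 : 0 < t := Real.exp_pos _
  have ht1 : t < 1 := by rw [ht, Real.exp_lt_one_iff, neg_lt_zero]; positivity
  have h := divergence_mixture_le_capacity hW hP x ht0 ht1
  have hq0 : ∀ y', 0 ≤ outDist P W y' := outDist_nonneg hW hP.1
  rw [← Finset.add_sum_erase _ _ (Finset.mem_univ y), ← hq] at h
  have e1 : W x y * Real.log (W x y / ((1 - t) * 0 + t * W x y)) = |capacity W| + 2 := by
    rw [mul_zero, zero_add, div_mul_cancel_right₀ hxy.ne', Real.log_inv, ht, Real.log_exp]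
    field_simp
  have e2 : -1 ≤ ∑ y' ∈ Finset.univ.erase y,
      W x y' * Real.log (W x y' / ((1 - t) * outDist P W y' + t * W x y')) := by
    have hnn : ∀ y', 0 ≤ (1 - t) * outDist P W y' + t * W x y' := fun y' => by
      have := hq0 y'
      have := (hW x).1 y'
      have : 0 < 1 - t := by linarith
      positivity
    calc (-1 : ℝ) = ∑ y', -((1 - t) * outDist P W y' + t * W x y') := by
          rw [Finset.sum_neg_distrib, Finset.sum_add_distrib, ← Finset.mul_sum, ← Finset.mul_sum,
            sum_outDist hW hP.1, (hW x).2]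
          ring
      _ ≤ ∑ y' ∈ Finset.univ.erase y, -((1 - t) * outDist P W y' + t * W x y') := by
          rw [← Finset.add_sum_erase _ _ (Finset.mem_univ y)]
          linarith [hnn y]
      _ ≤ _ := Finset.sum_le_sum fun y' _ => by
          have h3 := (hW x).1 y'
          have := sub_le_mul_log_div h3 (hnn y') fun hne => by
            have := hq0 y'
            have : 0 < W x y' := lt_of_le_of_ne h3 hne.symm
            have : 0 < 1 - t := by linarith
            positivity
          linarith
  rw [e1] at h
  linarith [le_abs_self (capacity W)]

theorem divergence_le_capacity {X Y : Type*} [Fintype X] [Fintype Y] {W : X → Y → ℝ}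
    (hW : IsChannel W) {P : X → ℝ} (hP : P ∈ capacityAchievers W) (x : X) :
    ∑ y, W x y * Real.log (W x y / outDist P W y) ≤ capacity W := by
  have hlim : Tendsto (fun t : ℝ => ∑ y, W x y *
      Real.log (W x y / ((1 - t) * outDist P W y + t * W x y))) (nhdsWithin 0 (Ioi 0))
      (nhds (∑ y, W x y * Real.log (W x y / outDist P W y))) := by
    refine tendsto_finsetSum _ fun y _ => ?_
    rcases ((hW x).1 y).eq_or_lt with hy | hy
    · simp [← hy]
    have hq := outDist_pos_of_pos hW hP hy
    have hc : ContinuousAt (fun t : ℝ => W x y *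
        Real.log (W x y / ((1 - t) * outDist P W y + t * W x y))) 0 := by
      refine ContinuousAt.mul continuousAt_const (ContinuousAt.log ?_ ?_)
      · refine ContinuousAt.div continuousAt_const (by fun_prop) ?_
        simpa using hq.ne'
      · simpa using ⟨hy.ne', hq.ne'⟩
    simpa using hc.tendsto.mono_left nhdsWithin_le_nhds
  refine le_of_tendsto hlim ?_
  filter_upwards [Ioo_mem_nhdsGT (zero_lt_one' ℝ)] with t ht
  exact divergence_mixture_le_capacity hW hP x ht.1 ht.2

/-- The Karush-Kuhn-Tucker conditions for the capacity-achieving output distribution. -/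
theorem exists_saddle {X Y : Type*} [Fintype X] [Fintype Y] {W : X → Y → ℝ}
    (hW : IsChannel W) (hcol : NoZeroColumn W) (hne : (capacityAchievers W).Nonempty) :
    ∃ P, IsDist P ∧ qStar W = outDist P W ∧ (∀ y, 0 < qStar W y) ∧
      (∀ x, ∑ y, W x y * iStar W x y ≤ capacity W) ∧
      ∀ x, 0 < P x → ∑ y, W x y * iStar W x y = capacity W := by
  have hq : qStar W = outDist hne.choose W := by rw [qStar, dif_pos hne]
  have hP := hne.choose_spec
  set P := hne.choose
  have hD : ∀ x, ∑ y, W x y * iStar W x y ≤ capacity W := fun x => by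
    simp only [iStar, hq]
    exact divergence_le_capacity hW hP x
  refine ⟨P, hP.1, hq, fun y => ?_, hD, fun x hx => ?_⟩
  · obtain ⟨x, hx⟩ := hcol y
    rw [hq]
    exact outDist_pos_of_pos hW hP hx
  · refine le_antisymm (hD x) ?_
    by_contra! hlt
    have h1 : ∑ x, P x * ∑ y, W x y * iStar W x y = capacity W := by
      rw [← hP.2]
      simp [mutInfo, iStar, hq, Finset.mul_sum, mul_assoc]
    have h2 : ∑ x, P x * ∑ y, W x y * iStar W x y < ∑ x, P x * capacity W :=
      Finset.sum_lt_sum (fun x _ => mul_le_mul_of_nonneg_left (hD x) (hP.1.1 x))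
        ⟨x, Finset.mem_univ x, mul_lt_mul_of_pos_left hlt hx⟩
    rw [h1, ← Finset.sum_mul, hP.1.2, one_mul] at h2
    exact lt_irrefl _ h2

theorem capacityAchievers_nonempty {X Y : Type*} [Fintype X] [Fintype Y] [Nonempty X]
    {W : X → Y → ℝ} (h : 0 < numin W) : (capacityAchievers W).Nonempty := by
  by_contra hne
  have : ∀ x, nu W x = 0 := fun x => by simp [nu, iStar, qStar, hne]
  simp [numin, this] at h

end Saddle

section Feedback

variable {X Y : Type*}

/-- Probability of the output sequence `y` when the inputs are produced by the feedback
rule `f`. -/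
def pathProb (W : X → Y → ℝ) (f : List Y → X) (n : ℕ) (y : Fin n → Y) : ℝ :=
  ∏ k : Fin n, W (f ((List.ofFn y).take (k : ℕ))) (y k)

/-- Additive functional of the inputs and outputs along `y` under the feedback rule `f`. -/
def pathSum (j : X → Y → ℝ) (f : List Y → X) (n : ℕ) (y : Fin n → Y) : ℝ :=
  ∑ k : Fin n, j (f ((List.ofFn y).take (k : ℕ))) (y k)

theorem take_ofFn_snoc {n : ℕ} (y : Fin n → Y) (b : Y) {k : ℕ} (hk : k ≤ n) :
    (List.ofFn (Fin.snoc y b : Fin (n + 1) → Y)).take k = (List.ofFn y).take k := by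
  rw [List.ofFn_succ', List.concat_eq_append, List.take_append_of_le_length (by simpa using hk)]
  simp

theorem pathProb_snoc (W : X → Y → ℝ) (f : List Y → X) (n : ℕ) (y : Fin n → Y) (b : Y) :
    pathProb W f (n + 1) (Fin.snoc y b) = pathProb W f n y * W (f (List.ofFn y)) b := by
  unfold pathProb
  rw [Fin.prod_univ_castSucc]
  congr 1
  · exact Finset.prod_congr rfl fun k _ => by
      rw [Fin.val_castSucc, take_ofFn_snoc y b k.2.le, Fin.snoc_castSucc]
  · rw [Fin.val_last, take_ofFn_snoc y b le_rfl, Fin.snoc_last, List.take_of_length_le (by simp)]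

theorem pathSum_snoc (j : X → Y → ℝ) (f : List Y → X) (n : ℕ) (y : Fin n → Y) (b : Y) :
    pathSum j f (n + 1) (Fin.snoc y b) = pathSum j f n y + j (f (List.ofFn y)) b := by
  unfold pathSum
  rw [Fin.sum_univ_castSucc]
  congr 1
  · exact Finset.sum_congr rfl fun k _ => by
      rw [Fin.val_castSucc, take_ofFn_snoc y b k.2.le, Fin.snoc_castSucc]
  · rw [Fin.val_last, take_ofFn_snoc y b le_rfl, Fin.snoc_last, List.take_of_length_le (by simp)]

theorem sum_snoc [Fintype Y] {n : ℕ} (F : (Fin (n + 1) → Y) → ℝ) :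
    ∑ y, F y = ∑ y : Fin n → Y, ∑ b, F (Fin.snoc y b) := by
  rw [← (Fin.snocEquiv fun _ => Y).sum_comp, Fintype.sum_prod_type, Finset.sum_comm]
  rfl

theorem sum_pathProb_snoc [Fintype Y] (W : X → Y → ℝ) (f : List Y → X) {n : ℕ}
    (F : (Fin (n + 1) → Y) → ℝ) :
    ∑ y, pathProb W f (n + 1) y * F y =
      ∑ y, pathProb W f n y * ∑ b, W (f (List.ofFn y)) b * F (Fin.snoc y b) := by
  rw [sum_snoc]
  simp_rw [pathProb_snoc, Finset.mul_sum, mul_assoc]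

theorem pathProb_nonneg [Fintype Y] {W : X → Y → ℝ} (hW : IsChannel W) (f : List Y → X) (n : ℕ)
    (y : Fin n → Y) : 0 ≤ pathProb W f n y :=
  Finset.prod_nonneg fun _ _ => (hW _).1 _

theorem sum_pathProb [Fintype Y] {W : X → Y → ℝ} (hW : IsChannel W) (f : List Y → X) (n : ℕ) :
    ∑ y, pathProb W f n y = 1 := by
  induction n with
  | zero => simp [pathProb]
  | succ n ih =>
    have := sum_pathProb_snoc W f (n := n) fun _ => 1
    simpa [(hW _).2, ih] using this

end Feedback

section Converse

variable {X Y : Type*} [Fintype X] [Fintype Y] {W : X → Y → ℝ}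

/-- The information density centered at capacity. -/
def centeredDensity (W : X → Y → ℝ) (x : X) (y : Y) : ℝ := iStar W x y - capacity W

theorem sum_mul_centeredDensity (hW : IsChannel W) (x : X) :
    ∑ y, W x y * centeredDensity W x y = ∑ y, W x y * iStar W x y - capacity W := by
  simp [centeredDensity, mul_sub, Finset.sum_sub_distrib, ← Finset.sum_mul, (hW x).2]

theorem variance_centeredDensity (hW : IsChannel W) (x : X) :
    ∑ y, W x y * centeredDensity W x y ^ 2 - (∑ y, W x y * centeredDensity W x y) ^ 2 =
      nu W x := by
  have h : ∑ y, W x y * centeredDensity W x y ^ 2 = ∑ y, W x y * iStar W x y ^ 2 -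
      2 * capacity W * ∑ y, W x y * iStar W x y + capacity W ^ 2 := by
    calc _ = ∑ y, (W x y * iStar W x y ^ 2 - 2 * capacity W * (W x y * iStar W x y) +
          W x y * capacity W ^ 2) := Finset.sum_congr rfl fun y _ => by
            rw [centeredDensity]; ring
      _ = _ := by
        rw [Finset.sum_add_distrib, Finset.sum_sub_distrib, ← Finset.mul_sum, ← Finset.sum_mul,
          (hW x).2, one_mul]
  rw [h, sum_mul_centeredDensity hW, nu]
  ring

theorem exists_abs_centeredDensity_le (W : X → Y → ℝ) :
    ∃ B, 0 ≤ B ∧ ∀ x y, |centeredDensity W x y| ≤ B := by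
  refine ⟨∑ x, ∑ y, |centeredDensity W x y|, by positivity, fun x y => ?_⟩
  exact (Finset.single_le_sum (f := fun y => |centeredDensity W x y|)
    (fun _ _ => abs_nonneg _) (Finset.mem_univ y)).trans
    (Finset.single_le_sum (f := fun x => ∑ y, |centeredDensity W x y|)
      (fun _ _ => by positivity) (Finset.mem_univ x))

theorem exists_sum_pathProb_valueFn_le (hW : IsChannel W)
    (hD : ∀ x, ∑ y, W x y * iStar W x y ≤ capacity W) {s₁ s₂ : ℝ} (h₁ : 0 < s₁) (h₂ : 0 < s₂)
    (hν₁ : ∀ x, s₁ ^ 2 ≤ nu W x) (hν₂ : ∀ x, nu W x ≤ s₂ ^ 2) :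
    ∃ K, 0 ≤ K ∧ ∀ (f : List Y → X) (a : ℝ) (n : ℕ) (T : ℝ), 1 ≤ T →
      ∑ y, pathProb W f n y *
        valueFn s₁ s₂ ((a + pathSum (centeredDensity W) f n y) / Real.sqrt T) ≤
      valueFn s₁ s₂ (a / Real.sqrt (T + n)) + n * (K / Real.sqrt T ^ 3) := by
  obtain ⟨B, hB, hBd⟩ := exists_abs_centeredDensity_le W
  obtain ⟨K, hK, H⟩ := exists_valueFn_step h₁ h₂ B hB
  refine ⟨K, hK, fun f a n => ?_⟩
  induction n with
  | zero => intro T _; simp [pathProb, pathSum]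
  | succ n ih =>
    intro T hT
    have hT1 : 1 ≤ Real.sqrt T := Real.one_le_sqrt.2 hT
    rw [sum_pathProb_snoc]
    calc _ ≤ ∑ y, pathProb W f n y * (valueFn s₁ s₂
          ((a + pathSum (centeredDensity W) f n y) / Real.sqrt (T + 1)) + K / Real.sqrt T ^ 3) := by
          refine Finset.sum_le_sum fun y _ =>
            mul_le_mul_of_nonneg_left ?_ (pathProb_nonneg hW f n y)
          have := H (W (f (List.ofFn y))) (centeredDensity W (f (List.ofFn y)))
            (hW _).1 (hW _).2 (fun b _ => hBd _ b)
            (by rw [sum_mul_centeredDensity hW]; linarith [hD (f (List.ofFn y))])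
            (by rw [variance_centeredDensity hW]; exact hν₁ _)
            (by rw [variance_centeredDensity hW]; exact hν₂ _)
            (a + pathSum (centeredDensity W) f n y) (Real.sqrt T) hT1
          rw [Real.sq_sqrt (by linarith)] at this
          simpa only [pathSum_snoc, add_assoc] using this
      _ ≤ valueFn s₁ s₂ (a / Real.sqrt (T + 1 + n)) + n * (K / Real.sqrt (T + 1) ^ 3) +
          K / Real.sqrt T ^ 3 := by
          simp only [mul_add, Finset.sum_add_distrib, ← Finset.sum_mul, sum_pathProb hW, one_mul]
          linarith [ih (T + 1) (by linarith)]
      _ ≤ _ := by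
          have : n * (K / Real.sqrt (T + 1) ^ 3) ≤ n * (K / Real.sqrt T ^ 3) := by
            gcongr; linarith
          push_cast
          rw [show T + (n + 1 : ℝ) = T + 1 + n by ring]
          linarith

theorem pathProb_eq_exp_mul (hW : IsChannel W) (hq : ∀ y, 0 < qStar W y) (f : List Y → X) {n : ℕ}
    {y : Fin n → Y} (hy : pathProb W f n y ≠ 0) :
    pathProb W f n y = Real.exp (pathSum (centeredDensity W) f n y + n * capacity W) *
      ∏ k, qStar W (y k) := by
  have h : pathSum (centeredDensity W) f n y + n * capacity W =
      ∑ k : Fin n, iStar W (f ((List.ofFn y).take (k : ℕ))) (y k) := by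
    simp [pathSum, centeredDensity]
  rw [h, Real.exp_sum, ← Finset.prod_mul_distrib]
  refine Finset.prod_congr rfl fun k _ => ?_
  have hk : W (f ((List.ofFn y).take (k : ℕ))) (y k) ≠ 0 :=
    Finset.prod_ne_zero_iff.1 hy k (Finset.mem_univ k)
  have hk' := lt_of_le_of_ne ((hW _).1 _) hk.symm
  rw [iStar, Real.exp_log (div_pos hk' (hq _)), div_mul_cancel₀ _ (hq _).ne']

/-- A meta-converse: any upper bound on the upper tail of the information density, uniform over
feedback rules, bounds the success probability of feedback codes. -/
theorem one_sub_le_of_minErr_le (hW : IsChannel W) (hq : ∀ y, 0 < qStar W y)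
    (hq1 : ∑ y, qStar W y = 1) {n : ℕ} {R ε θ p : ℝ} (hε : minErr W n R ≤ ε)
    (hp : ∀ f : List Y → X, ∑ y, pathProb W f n y *
      (if θ < pathSum (centeredDensity W) f n y then 1 else 0) ≤ p) [Nonempty X] :
    1 - ε ≤ p + Real.exp (θ + n * capacity W) / (⌈Real.exp (n * R)⌉₊ : ℝ) := by
  set M := ⌈Real.exp (n * R)⌉₊ with hM
  have hM0 : 0 < M := Nat.ceil_pos.2 (Real.exp_pos _)
  have hM0' : (0 : ℝ) < M := Nat.cast_pos.2 hM0
  have hqn : ∑ y : Fin n → Y, ∏ k, qStar W (y k) = 1 := by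
    rw [← Fintype.piFinset_univ, ← Finset.prod_univ_sum]
    simp [hq1]
  have key : ∀ (enc : Fin M → List Y → X) (dec : (Fin n → Y) → Fin M),
      1 - p - Real.exp (θ + n * capacity W) / M ≤ errProb W n M enc dec := by
    intro enc dec
    have h1 : ∀ m y, pathProb W (enc m) n y * (if dec y = m then 0 else 1) ≥
        pathProb W (enc m) n y - pathProb W (enc m) n y *
          (if θ < pathSum (centeredDensity W) (enc m) n y then 1 else 0) -
          Real.exp (θ + n * capacity W) * ((∏ k, qStar W (y k)) * if dec y = m then 1 else 0) := by
      intro m y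
      have h0 := pathProb_nonneg hW (enc m) n y
      have hQ : 0 ≤ ∏ k, qStar W (y k) := Finset.prod_nonneg fun k _ => (hq _).le
      have hE := Real.exp_pos (θ + n * capacity W)
      have hEQ := mul_nonneg hE.le hQ
      split_ifs with h2 h3 h3
      · simp; positivity
      · simp only [mul_zero, mul_one, sub_zero, ge_iff_le, sub_nonpos]
        by_cases hz : pathProb W (enc m) n y = 0
        · rw [hz]; exact hEQ
        rw [pathProb_eq_exp_mul hW hq (enc m) hz]
        gcongr
        linarith
      · simpa using h0
      · simp
    have h2 : ∀ m, ∑ y, pathProb W (enc m) n y * (if dec y = m then 0 else 1) ≥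
        1 - p - Real.exp (θ + n * capacity W) *
          ∑ y : Fin n → Y, (∏ k, qStar W (y k)) * if dec y = m then 1 else 0 := by
      intro m
      have := Finset.sum_le_sum fun y (_ : y ∈ Finset.univ) => h1 m y
      rw [Finset.sum_sub_distrib, Finset.sum_sub_distrib, sum_pathProb hW, ← Finset.mul_sum] at this
      linarith [hp (enc m)]
    have h3 := Finset.sum_le_sum fun m (_ : m ∈ Finset.univ) => h2 m
    rw [Finset.sum_sub_distrib, ← Finset.mul_sum, Finset.sum_comm] at h3
    simp only [← Finset.mul_sum, Finset.sum_ite_eq, Finset.mem_univ, if_true, mul_one, hqn,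
      Finset.sum_const, Finset.card_univ, Fintype.card_fin, nsmul_eq_mul] at h3
    have h4 : errProb W n M enc dec =
        (M : ℝ)⁻¹ * ∑ m, ∑ y, pathProb W (enc m) n y * (if dec y = m then 0 else 1) := rfl
    rw [h4, ← div_eq_inv_mul, le_div_iff₀ hM0', sub_mul, div_mul_cancel₀ _ hM0'.ne']
    linarith
  have : 1 - p - Real.exp (θ + n * capacity W) / M ≤ minErr W n R := by
    refine le_csInf ?_ ?_
    · exact ⟨_, fun _ _ => Classical.arbitrary X, fun _ => ⟨0, hM0⟩, rfl⟩
    · rintro e ⟨enc, dec, rfl⟩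
      exact key enc dec
  linarith

theorem bddAbove_code_sizes (hW : IsChannel W) (hq : ∀ y, 0 < qStar W y)
    (hq1 : ∑ y, qStar W y = 1) [Nonempty X] (n : ℕ) {ε : ℝ} (hε : ε < 1) :
    BddAbove {m : ℝ | ∃ R : ℝ, m = (⌈Real.exp (n * R)⌉₊ : ℝ) ∧ minErr W n R ≤ ε} := by
  obtain ⟨B, -, hB⟩ := exists_abs_centeredDensity_le W
  refine ⟨Real.exp (n * B + n * capacity W) / (1 - ε), ?_⟩
  rintro m ⟨R, rfl, hR⟩
  have hM0 : (0 : ℝ) < ⌈Real.exp (n * R)⌉₊ := Nat.cast_pos.2 (Nat.ceil_pos.2 (Real.exp_pos _))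
  have := one_sub_le_of_minErr_le hW hq hq1 (θ := n * B) (p := 0) hR fun f => by
    refine (Finset.sum_eq_zero fun y _ => ?_).le
    rw [if_neg, mul_zero]
    rw [not_lt, pathSum]
    calc _ ≤ ∑ _k : Fin n, B := Finset.sum_le_sum fun k _ => (le_abs_self _).trans (hB _ _)
      _ = n * B := by simp
  rw [zero_add, le_div_iff₀ hM0] at this
  rw [le_div_iff₀ (by linarith)]
  linarith

theorem minErr_le_errProb {X Y : Type*} [Fintype Y] {W : X → Y → ℝ} (hW : IsChannel W) (n : ℕ) (R : ℝ)
    (enc : Fin ⌈Real.exp (n * R)⌉₊ → List Y → X)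
    (dec : (Fin n → Y) → Fin ⌈Real.exp (n * R)⌉₊) :
    minErr W n R ≤ errProb W n ⌈Real.exp (n * R)⌉₊ enc dec := by
  refine csInf_le ⟨0, ?_⟩ ⟨enc, dec, rfl⟩
  rintro e ⟨enc, dec, rfl⟩
  exact mul_nonneg (by positivity) (Finset.sum_nonneg fun m _ => Finset.sum_nonneg fun y _ =>
    mul_nonneg (pathProb_nonneg hW (enc m) n y) (by split_ifs <;> norm_num))

theorem one_le_Mfb (hW : IsChannel W) (hq : ∀ y, 0 < qStar W y)
    (hq1 : ∑ y, qStar W y = 1) [Nonempty X] (n : ℕ) {ε : ℝ} (hε0 : 0 ≤ ε) (hε : ε < 1) :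
    1 ≤ Mfb W n ε := by
  refine le_csSup (bddAbove_code_sizes hW hq hq1 n hε) ⟨0, by simp, ?_⟩
  have hone : ⌈Real.exp (n * 0)⌉₊ = 1 := by simp
  refine (minErr_le_errProb hW n 0 (fun _ _ => Classical.arbitrary X)
    fun _ => ⟨0, by rw [hone]; exact one_pos⟩).trans (le_trans (le_of_eq ?_) hε0)
  have : Subsingleton (Fin ⌈Real.exp (n * 0)⌉₊) := by rw [hone]; infer_instance
  simp [errProb, Subsingleton.elim _ (⟨0, by rw [hone]; exact one_pos⟩ : Fin ⌈Real.exp (n * 0)⌉₊)]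

theorem sum_pathProb_tail_mul_le (hW : IsChannel W) {s₁ s₂ : ℝ} (h₁ : 0 < s₁) (h₂ : 0 < s₂)
    {K : ℝ} {n : ℕ} {T : ℝ} (hT : 1 ≤ T) (f : List Y → X) (θ b : ℝ)
    (H : ∀ a : ℝ, ∑ y, pathProb W f n y *
        valueFn s₁ s₂ ((a + pathSum (centeredDensity W) f n y) / Real.sqrt T) ≤
      valueFn s₁ s₂ (a / Real.sqrt (T + n)) + n * (K / Real.sqrt T ^ 3)) :
    (∑ y, pathProb W f n y * (if θ < pathSum (centeredDensity W) f n y then 1 else 0)) *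
        valueFn s₁ s₂ b ≤
      valueFn s₁ s₂ ((b * Real.sqrt T - θ) / Real.sqrt (T + n)) + n * (K / Real.sqrt T ^ 3) := by
  refine le_trans ?_ (H (b * Real.sqrt T - θ))
  rw [Finset.sum_mul]
  refine Finset.sum_le_sum fun y _ => ?_
  rw [mul_assoc]
  refine mul_le_mul_of_nonneg_left ?_ (pathProb_nonneg hW f n y)
  split_ifs with h
  · rw [one_mul]
    apply (strictMono_valueFn h₁ h₂).monotone
    have : 0 < Real.sqrt T := Real.sqrt_pos.2 (by linarith)
    rw [le_div_iff₀ this]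
    linarith
  · rw [zero_mul]
    exact (valueFn_pos h₁ h₂ _).le

theorem eventually_secondOrder_le (hW : IsChannel W) (hq : ∀ y, 0 < qStar W y)
    (hq1 : ∑ y, qStar W y = 1) [Nonempty X]
    (hD : ∀ x, ∑ y, W x y * iStar W x y ≤ capacity W) {s₁ s₂ : ℝ} (h₁ : 0 < s₁) (h₂ : 0 < s₂)
    (hν₁ : ∀ x, s₁ ^ 2 ≤ nu W x) (hν₂ : ∀ x, nu W x ≤ s₂ ^ 2) {ε r : ℝ} (hε0 : 0 ≤ ε)
    (hε1 : ε < 1) (hr : valueFn s₁ s₂ (-r) < 1 - ε) :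
    ∀ᶠ n : ℕ in atTop, (Real.log (Mfb W n ε) - n * capacity W) / Real.sqrt n ≤ r := by
  obtain ⟨K, hK, H⟩ := exists_sum_pathProb_valueFn_le hW hD h₁ h₂ hν₁ hν₂
  obtain ⟨η, hη0, hη⟩ : ∃ η, 0 < η ∧ valueFn s₁ s₂ (-r) < 1 - ε - η :=
    ⟨(1 - ε - valueFn s₁ s₂ (-r)) / 2, by linarith, by linarith⟩
  obtain ⟨b, hb⟩ : ∃ b, valueFn s₁ s₂ (-r) < (1 - ε - η) * valueFn s₁ s₂ b := by
    have := (tendsto_valueFn_atTop h₁ h₂).const_mul (1 - ε - η)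
    rw [mul_one] at this
    exact (this.eventually (lt_mem_nhds hη)).exists
  obtain ⟨δ, hδ0, hδ⟩ : ∃ δ, 0 < δ ∧ valueFn s₁ s₂
      ((b * Real.sqrt δ - (r - δ)) / Real.sqrt (1 + δ)) < (1 - ε - η) * valueFn s₁ s₂ b := by
    have hc : ContinuousAt (fun δ => valueFn s₁ s₂
        ((b * Real.sqrt δ - (r - δ)) / Real.sqrt (1 + δ))) 0 := by
      refine (continuous_valueFn h₁ h₂).continuousAt.comp (ContinuousAt.div ?_ ?_ ?_)
      · fun_prop
      · fun_prop
      · simp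
    have h0 : ∀ᶠ δ in nhdsWithin (0 : ℝ) (Ioi 0), valueFn s₁ s₂
        ((b * Real.sqrt δ - (r - δ)) / Real.sqrt (1 + δ)) < (1 - ε - η) * valueFn s₁ s₂ b :=
      (hc.eventually (gt_mem_nhds (by simpa using hb))).filter_mono nhdsWithin_le_nhds
    obtain ⟨δ, h, h'⟩ := (h0.and self_mem_nhdsWithin).exists
    exact ⟨δ, h', h⟩
  set v := valueFn s₁ s₂ ((b * Real.sqrt δ - (r - δ)) / Real.sqrt (1 + δ)) with hv
  have hsqrt : Tendsto (fun n : ℕ => Real.sqrt n) atTop atTop :=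
    Real.tendsto_sqrt_atTop.comp tendsto_natCast_atTop_atTop
  have ev1 : ∀ᶠ n : ℕ in atTop, Real.exp (-(δ * Real.sqrt n)) ≤ η := by
    have : Tendsto (fun n : ℕ => Real.exp (-(δ * Real.sqrt n))) atTop (nhds 0) :=
      Real.tendsto_exp_neg_atTop_nhds_zero.comp (hsqrt.const_mul_atTop hδ0)
    exact (this.eventually (gt_mem_nhds hη0)).mono fun _ => le_of_lt
  have ev2 : ∀ᶠ n : ℕ in atTop,
      v + K / Real.sqrt δ ^ 3 * (Real.sqrt n)⁻¹ < (1 - ε - η) * valueFn s₁ s₂ b := by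
    have : Tendsto (fun n : ℕ => v + K / Real.sqrt δ ^ 3 * (Real.sqrt n)⁻¹) atTop (nhds v) := by
      simpa using ((tendsto_inv_atTop_zero.comp hsqrt).const_mul (K / Real.sqrt δ ^ 3)).const_add v
    exact this.eventually (gt_mem_nhds hδ)
  have ev3 : ∀ᶠ n : ℕ in atTop, 1 ≤ δ * n :=
    (tendsto_natCast_atTop_atTop.const_mul_atTop hδ0).eventually_ge_atTop 1
  filter_upwards [ev1, ev2, ev3, eventually_gt_atTop 0] with n e1 e2 e3 hn
  have hn0 : (0 : ℝ) < n := Nat.cast_pos.2 hn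
  have hs0 := Real.sqrt_pos.2 hn0
  by_contra! hlt
  rw [lt_div_iff₀ hs0] at hlt
  have hlt' : Real.exp (n * capacity W + r * Real.sqrt n) < Mfb W n ε := by
    rw [← Real.lt_log_iff_exp_lt (by linarith [one_le_Mfb hW hq hq1 n hε0 hε1])]
    linarith
  have hne : {m : ℝ | ∃ R : ℝ, m = (⌈Real.exp (n * R)⌉₊ : ℝ) ∧ minErr W n R ≤ ε}.Nonempty := by
    by_contra hemp
    rw [not_nonempty_iff_eq_empty] at hemp
    have := one_le_Mfb hW hq hq1 n hε0 hε1
    rw [Mfb, hemp, Real.sSup_empty] at this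
    linarith
  obtain ⟨m, ⟨R, rfl, hR⟩, hm⟩ := exists_lt_of_lt_csSup hne hlt'
  have hvb := valueFn_pos h₁ h₂ b
  have hδs := Real.sqrt_pos.2 hδ0
  set p := (v + K / Real.sqrt δ ^ 3 * (Real.sqrt n)⁻¹) / valueFn s₁ s₂ b with hp
  have hmain := one_sub_le_of_minErr_le hW hq hq1 (θ := (r - δ) * Real.sqrt n) (p := p) hR
    fun f => by
      rw [hp, le_div_iff₀ hvb]
      have := sum_pathProb_tail_mul_le hW h₁ h₂ e3 f ((r - δ) * Real.sqrt n) b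
        fun a => H f a n (δ * n) e3
      have ea : valueFn s₁ s₂ ((b * Real.sqrt (δ * n) - (r - δ) * Real.sqrt n) /
          Real.sqrt (δ * n + n)) = v := by
        rw [hv, show δ * n + n = (1 + δ) * n by ring, Real.sqrt_mul hδ0.le,
          Real.sqrt_mul (by linarith)]
        congr 1
        have : 0 < Real.sqrt (1 + δ) := Real.sqrt_pos.2 (by linarith)
        field_simp
      have eb : n * (K / Real.sqrt (δ * n) ^ 3) = K / Real.sqrt δ ^ 3 * (Real.sqrt n)⁻¹ := by
        have h : ∀ s : ℝ, 0 < s →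
            s ^ 2 * (K / (Real.sqrt δ * s) ^ 3) = K / Real.sqrt δ ^ 3 * s⁻¹ := fun s hs => by
          field_simp
        have := h _ hs0
        rwa [Real.sq_sqrt hn0.le, ← Real.sqrt_mul hδ0.le] at this
      rwa [ea, eb] at this
  have hexp : Real.exp ((r - δ) * Real.sqrt n + n * capacity W) /
      (⌈Real.exp (n * R)⌉₊ : ℝ) ≤ η := by
    rw [div_le_iff₀ ((Real.exp_pos _).trans hm)]
    calc _ = Real.exp (-(δ * Real.sqrt n)) * Real.exp (n * capacity W + r * Real.sqrt n) := by
          rw [← Real.exp_add]; ring_nf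
      _ ≤ _ := mul_le_mul e1 hm.le (Real.exp_pos _).le hη0.le
  have : p < 1 - ε - η := by rw [hp, div_lt_iff₀ hvb]; exact e2
  linarith

end Converse

section Achievability

theorem sum_pathProb_mul_pathSum_sq_le {X Y : Type*} [Fintype Y] {W : X → Y → ℝ} (hW : IsChannel W) {j : X → Y → ℝ} {f : List Y → X}
    {v : ℝ} (h0 : ∀ l, ∑ b, W (f l) b * j (f l) b = 0)
    (h2 : ∀ l, ∑ b, W (f l) b * j (f l) b ^ 2 ≤ v) (n : ℕ) :
    ∑ y, pathProb W f n y * pathSum j f n y ^ 2 ≤ n * v := by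
  induction n with
  | zero => simp [pathSum]
  | succ n ih =>
    rw [sum_pathProb_snoc]
    calc _ ≤ ∑ y, pathProb W f n y * (pathSum j f n y ^ 2 + v) := by
          refine Finset.sum_le_sum fun y _ =>
            mul_le_mul_of_nonneg_left ?_ (pathProb_nonneg hW f n y)
          calc _ = pathSum j f n y ^ 2 * ∑ b, W (f (List.ofFn y)) b +
                2 * pathSum j f n y * ∑ b, W (f (List.ofFn y)) b * j (f (List.ofFn y)) b +
                ∑ b, W (f (List.ofFn y)) b * j (f (List.ofFn y)) b ^ 2 := by
                simp only [Finset.mul_sum, ← Finset.sum_add_distrib]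
                refine Finset.sum_congr rfl fun b _ => ?_
                rw [pathSum_snoc]
                ring
            _ ≤ _ := by
                rw [h0, (hW _).2]
                linarith [h2 (List.ofFn y)]
      _ ≤ _ := by
          simp only [mul_add, Finset.sum_add_distrib, ← Finset.sum_mul, sum_pathProb hW]
          push_cast
          linarith

theorem sum_pathProb_lower_tail_le {X Y : Type*} [Fintype Y] {W : X → Y → ℝ} (hW : IsChannel W) {j : X → Y → ℝ} {f : List Y → X}
    {v θ : ℝ} (h0 : ∀ l, ∑ b, W (f l) b * j (f l) b = 0)
    (h2 : ∀ l, ∑ b, W (f l) b * j (f l) b ^ 2 ≤ v) (n : ℕ) (hθ : 0 < θ) :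
    ∑ y, pathProb W f n y * (if pathSum j f n y ≤ -θ then 1 else 0) ≤ n * v / θ ^ 2 := by
  rw [le_div_iff₀ (by positivity)]
  refine le_trans ?_ (sum_pathProb_mul_pathSum_sq_le hW h0 h2 n)
  rw [Finset.sum_mul]
  refine Finset.sum_le_sum fun y _ => ?_
  rw [mul_assoc]
  refine mul_le_mul_of_nonneg_left ?_ (pathProb_nonneg hW f n y)
  split_ifs with h
  · nlinarith
  · rw [zero_mul]
    positivity

/-- Feinstein's maximal coding lemma. -/
theorem exists_feinstein_code {A B : Type*} [Fintype A] [Fintype B] [Nonempty A]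
    {V : A → B → ℝ} (hV : IsChannel V) {P : A → ℝ} (hP : IsDist P) {γ e ε : ℝ} (hγ : 0 < γ)
    (he : ∀ a, 0 < P a → ∑ b, V a b * (if γ * outDist P V b ≤ V a b then 0 else 1) ≤ e)
    (M : ℕ) (hM : ∀ i < M, i / γ + e ≤ ε) :
    ∃ (c : ℕ → A) (d : B → ℕ),
      (∀ i < M, 1 - ε ≤ ∑ b, V (c i) b * (if d b = i then 1 else 0)) ∧
      ∀ b, d b < M → γ * outDist P V b ≤ V (c (d b)) b := by
  induction M with
  | zero => exact ⟨fun _ => Classical.arbitrary A, fun _ => 0, by simp, by simp⟩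
  | succ M ih =>
    obtain ⟨c, d, hc, hd⟩ := ih fun i hi => hM i (by omega)
    have hdec : ∑ b, outDist P V b * (if d b < M then 1 else 0) ≤ M / γ := by
      rw [le_div_iff₀ hγ]
      calc _ = ∑ b, γ * outDist P V b * (if d b < M then 1 else 0) := by
            rw [Finset.sum_mul]
            exact Finset.sum_congr rfl fun b _ => by ring
        _ ≤ ∑ b, ∑ i ∈ Finset.range M, V (c i) b * (if d b = i then 1 else 0) := by
            refine Finset.sum_le_sum fun b _ => ?_
            split_ifs with h
            · simpa [h] using hd b h
            · rw [mul_zero]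
              exact Finset.sum_nonneg fun i _ =>
                mul_nonneg ((hV _).1 _) (by split_ifs <;> norm_num)
        _ = ∑ i ∈ Finset.range M, ∑ b, V (c i) b * (if d b = i then 1 else 0) :=
            Finset.sum_comm
        _ ≤ ∑ i ∈ Finset.range M, 1 := by
            refine Finset.sum_le_sum fun i _ => ?_
            refine (Finset.sum_le_sum fun b _ => mul_le_of_le_one_right ((hV _).1 _) ?_).trans
              (hV (c i)).2.le
            split_ifs <;> norm_num
        _ = M := by simp
    obtain ⟨a, ha⟩ : ∃ a, 1 - ε ≤ ∑ b, V a b *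
        (if γ * outDist P V b ≤ V a b ∧ ¬ d b < M then 1 else 0) := by
      by_contra hcon
      have hlt : ∀ a, ∑ b, V a b *
          (if γ * outDist P V b ≤ V a b ∧ ¬ d b < M then 1 else 0) < 1 - ε :=
        fun a => not_le.1 fun h => hcon ⟨a, h⟩
      have h1 : ∀ a, 0 < P a → M / γ < ∑ b, V a b * (if d b < M then 1 else 0) := by
        intro a ha
        have h2 : ∑ b, V a b ≤ ∑ b, (V a b * (if γ * outDist P V b ≤ V a b then 0 else 1) +
            V a b * (if γ * outDist P V b ≤ V a b ∧ ¬ d b < M then 1 else 0) +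
            V a b * (if d b < M then 1 else 0)) := by
          refine Finset.sum_le_sum fun b _ => ?_
          have := (hV a).1 b
          split_ifs <;> simp_all
        rw [Finset.sum_add_distrib, Finset.sum_add_distrib, (hV a).2] at h2
        linarith [he a ha, hlt a, hM M (by omega)]
      obtain ⟨a₀, ha₀⟩ : ∃ a, 0 < P a := by
        by_contra! h
        have := Finset.sum_nonpos fun a (_ : a ∈ Finset.univ) => h a
        rw [hP.2] at this
        linarith
      have h3 : ∑ a, P a * (M / γ) < ∑ a, P a * ∑ b, V a b * (if d b < M then 1 else 0) := by
        refine Finset.sum_lt_sum (fun a _ => ?_)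
          ⟨a₀, Finset.mem_univ _, mul_lt_mul_of_pos_left (h1 a₀ ha₀) ha₀⟩
        rcases (hP.1 a).eq_or_lt with h | h
        · simp [← h]
        · exact mul_le_mul_of_nonneg_left (h1 a h).le h.le
      rw [← Finset.sum_mul, hP.2, one_mul] at h3
      refine absurd hdec (not_le.2 (h3.trans_le (le_of_eq ?_)))
      simp only [outDist, Finset.sum_mul, Finset.mul_sum, ← mul_assoc]
      exact Finset.sum_comm
    refine ⟨Function.update c M a,
      fun b => if d b < M then d b else if γ * outDist P V b ≤ V a b then M else M + 1, ?_, ?_⟩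
    · intro i hi
      rcases (Nat.lt_succ_iff_lt_or_eq.1 hi) with h | rfl
      · rw [Function.update_of_ne h.ne]
        refine (hc i h).trans (le_of_eq (Finset.sum_congr rfl fun b _ => ?_))
        congr 2
        grind
      · rw [Function.update_self]
        refine ha.trans (le_of_eq (Finset.sum_congr rfl fun b _ => ?_))
        congr 2
        grind
    · intro b hb
      by_cases h : d b < M
      · simp only [h, if_true]
        rw [Function.update_of_ne h.ne]
        exact hd b h
      · by_cases h' : γ * outDist P V b ≤ V a b
        · simp [h, h']
        · simp [h, h'] at hb

/-- The feedback rule that sends the codeword `c` and then repeats the symbol `x₀`. -/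
def blockRule {X Y : Type*} {n : ℕ} (x₀ : X) (c : Fin n → X) (l : List Y) : X :=
  if h : l.length < n then c ⟨l.length, h⟩ else x₀

theorem pathProb_blockRule {X Y : Type*} {W : X → Y → ℝ} {n : ℕ} (x₀ : X) (c : Fin n → X) (y : Fin n → Y) :
    pathProb W (blockRule x₀ c) n y = ∏ k, W (c k) (y k) := by
  refine Finset.prod_congr rfl fun k _ => ?_
  simp [blockRule, k.2.le]

variable {X Y : Type*} [Fintype X] [Fintype Y] {W : X → Y → ℝ}

theorem isDist_prod {P : X → ℝ} (hP : IsDist P) (n : ℕ) :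
    IsDist fun c : Fin n → X => ∏ k, P (c k) := by
  refine ⟨fun c => Finset.prod_nonneg fun k _ => hP.1 _, ?_⟩
  rw [← Fintype.piFinset_univ, ← Finset.prod_univ_sum]
  simp [hP.2]

theorem outDist_prod {X Y : Type*} [Fintype X] {W : X → Y → ℝ} (P : X → ℝ) {n : ℕ} (x₀ : X) (y : Fin n → Y) :
    outDist (fun c : Fin n → X => ∏ k, P (c k)) (fun c => pathProb W (blockRule x₀ c) n) y =
      ∏ k, outDist P W (y k) := by
  simp only [outDist, pathProb_blockRule, ← Finset.prod_mul_distrib]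
  rw [Finset.prod_univ_sum, Fintype.piFinset_univ]

theorem exists_eventually_le_secondOrder (hW : IsChannel W) [Nonempty X] {P : X → ℝ}
    (hP : IsDist P) (hqP : qStar W = outDist P W) (hq : ∀ y, 0 < qStar W y)
    (hD : ∀ x, 0 < P x → ∑ y, W x y * iStar W x y = capacity W) {v ε : ℝ} (hv : 0 ≤ v)
    (hν : ∀ x, nu W x ≤ v) (hε0 : 0 < ε) (hε1 : ε < 1) :
    ∃ c, ∀ᶠ n : ℕ in atTop, c ≤ (Real.log (Mfb W n ε) - n * capacity W) / Real.sqrt n := by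
  obtain ⟨x₀, hx₀⟩ : ∃ x, 0 < P x := by
    by_contra! h
    have := Finset.sum_nonpos fun a (_ : a ∈ Finset.univ) => h a
    rw [hP.2] at this
    linarith
  set κ := 2 * (v + 1) / ε with hκ
  have hκ0 : 0 < κ := by positivity
  have hvκ : v / κ ^ 2 ≤ ε / 2 := by
    rw [div_le_iff₀ (by positivity), hκ]
    have : ε / 2 * (2 * (v + 1) / ε) ^ 2 = 2 * (v + 1) ^ 2 / ε := by field_simp
    rw [this, le_div_iff₀ hε0]
    nlinarith
  have hκε : κ⁻¹ ≤ ε / 2 := by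
    rw [hκ, inv_div, div_le_div_iff₀ (by positivity) two_pos]
    nlinarith
  refine ⟨-(2 * κ), ?_⟩
  filter_upwards [eventually_gt_atTop 0] with n hn
  have hn1 : (1 : ℝ) ≤ n := Nat.one_le_cast.2 hn
  have hs1 : 1 ≤ Real.sqrt n := Real.one_le_sqrt.2 hn1
  have hn0 : (0 : ℝ) < n := by linarith
  set R := capacity W - 2 * κ * Real.sqrt n / n with hR
  have hnR : n * R = n * capacity W - 2 * κ * Real.sqrt n := by
    rw [hR]
    field_simp
  set M := ⌈Real.exp (n * R)⌉₊ with hM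
  have hM0 : 0 < M := Nat.ceil_pos.2 (Real.exp_pos _)
  set γ := Real.exp (n * capacity W - κ * Real.sqrt n) with hγ
  have hexp : Real.exp (-(κ * Real.sqrt n)) ≤ ε / 2 := by
    refine le_trans ?_ hκε
    rw [Real.exp_neg]
    apply inv_anti₀ hκ0
    nlinarith [Real.add_one_le_exp (κ * Real.sqrt n)]
  have hsupp : ∀ c : Fin n → X, 0 < ∏ k, P (c k) → ∀ l : List Y, 0 < P (blockRule x₀ c l) := by
    intro c hc l
    rw [blockRule]
    split_ifs
    · exact lt_of_le_of_ne (hP.1 _)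
        (Finset.prod_ne_zero_iff.1 hc.ne' _ (Finset.mem_univ _)).symm
    · exact hx₀
  have htail : ∀ c : Fin n → X, 0 < ∏ k, P (c k) →
      ∑ y, pathProb W (blockRule x₀ c) n y *
        (if γ * outDist (fun c : Fin n → X => ∏ k, P (c k))
          (fun c => pathProb W (blockRule x₀ c) n) y ≤ pathProb W (blockRule x₀ c) n y
          then 0 else 1) ≤ ε / 2 := by
    intro c hc
    have hmean : ∀ l, ∑ b, W (blockRule x₀ c l) b * centeredDensity W (blockRule x₀ c l) b = 0 :=
      fun l => by rw [sum_mul_centeredDensity hW, hD _ (hsupp c hc l), sub_self]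
    have hcheb := sum_pathProb_lower_tail_le hW (j := centeredDensity W) (f := blockRule x₀ c)
      (v := v) (θ := κ * Real.sqrt n) hmean
      (fun l => by
        have := variance_centeredDensity hW (blockRule x₀ c l)
        rw [hmean] at this
        linarith [hν (blockRule x₀ c l)]) n (by positivity)
    have : n * v / (κ * Real.sqrt n) ^ 2 = v / κ ^ 2 := by
      rw [mul_pow, Real.sq_sqrt hn0.le]
      field_simp
    rw [this] at hcheb
    refine le_trans (Finset.sum_le_sum fun y _ => ?_) (hcheb.trans hvκ)
    by_cases hz : pathProb W (blockRule x₀ c) n y = 0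
    · simp [hz]
    refine mul_le_mul_of_nonneg_left ?_ (pathProb_nonneg hW _ n y)
    by_cases hZ : pathSum (centeredDensity W) (blockRule x₀ c) n y ≤ -(κ * Real.sqrt n)
    · rw [if_pos hZ]
      split_ifs <;> norm_num
    rw [if_pos]
    · split_ifs
      norm_num
    rw [outDist_prod, ← hqP, pathProb_eq_exp_mul hW hq _ hz, hγ]
    refine mul_le_mul_of_nonneg_right (Real.exp_le_exp.2 ?_)
      (Finset.prod_nonneg fun k _ => (hq _).le)
    linarith
  obtain ⟨c, d, hc, -⟩ := exists_feinstein_code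
    (V := fun c : Fin n → X => pathProb W (blockRule x₀ c) n)
    (fun c => ⟨pathProb_nonneg hW _ n, sum_pathProb hW _ n⟩) (isDist_prod hP n)
    (Real.exp_pos _) htail (ε := ε) M fun i hi => by
      have h1 : (i : ℝ) < Real.exp (n * R) := Nat.lt_ceil.1 hi
      have h2 : (i : ℝ) / γ ≤ Real.exp (-(κ * Real.sqrt n)) := by
        rw [div_le_iff₀ (Real.exp_pos _), ← Real.exp_add]
        refine h1.le.trans (le_of_eq ?_)
        rw [hnR]
        ring_nf
      linarith
  have herr : minErr W n R ≤ ε := by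
    refine (minErr_le_errProb hW n R (fun m => blockRule x₀ (c m))
      fun y => if h : d y < M then ⟨d y, h⟩ else ⟨0, hM0⟩).trans ?_
    have hM0' : (0 : ℝ) < M := Nat.cast_pos.2 hM0
    change (M : ℝ)⁻¹ * ∑ m : Fin M, ∑ y, pathProb W (blockRule x₀ (c m)) n y *
      (if (if h : d y < M then (⟨d y, h⟩ : Fin M) else ⟨0, hM0⟩) = m then 0 else 1) ≤ ε
    rw [← div_eq_inv_mul, div_le_iff₀ hM0']
    have h1 : ∀ m : Fin M, ∑ y, pathProb W (blockRule x₀ (c m)) n y *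
        (if (if h : d y < M then (⟨d y, h⟩ : Fin M) else ⟨0, hM0⟩) = m then 0 else 1) ≤ ε := by
      intro m
      have h2 : ∑ y, pathProb W (blockRule x₀ (c m)) n y *
          (if (if h : d y < M then (⟨d y, h⟩ : Fin M) else ⟨0, hM0⟩) = m then 0 else 1) ≤
          ∑ y, (pathProb W (blockRule x₀ (c m)) n y -
            pathProb W (blockRule x₀ (c m)) n y * (if d y = m then 1 else 0)) := by
        refine Finset.sum_le_sum fun y _ => ?_
        have h0 := pathProb_nonneg hW (blockRule x₀ (c m)) n y
        by_cases h : d y = m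
        · simp [h]
        · rw [if_neg h, mul_zero, sub_zero]
          exact mul_le_of_le_one_right h0 (by split_ifs <;> norm_num)
      rw [Finset.sum_sub_distrib, sum_pathProb hW] at h2
      linarith [hc m m.2]
    refine (Finset.sum_le_sum fun m _ => h1 m).trans (le_of_eq ?_)
    simp [mul_comm]
  have hMfb : Real.exp (n * R) ≤ Mfb W n ε :=
    (Nat.le_ceil _).trans (le_csSup (bddAbove_code_sizes hW hq
      (by rw [hqP]; exact sum_outDist hW hP) n hε1) ⟨R, rfl, herr⟩)
  have hlog := Real.log_le_log (Real.exp_pos _) hMfb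
  rw [Real.log_exp, hnR] at hlog
  rw [le_div_iff₀ (by linarith)]
  linarith

end Achievability

section SecondOrder

variable {X Y : Type*} [Fintype X] [Fintype Y] {W : X → Y → ℝ}

theorem limsup_secondOrder_le [Nonempty X] (hW : IsChannel W) (hcol : NoZeroColumn W)
    (hmin : 0 < numin W) {ε r : ℝ} (hε0 : 0 < ε) (hε1 : ε < 1)
    (hr : valueFn (Real.sqrt (numin W)) (Real.sqrt (numax W)) (-r) = 1 - ε) :
    Filter.limsup (fun n : ℕ =>
      (Real.log (Mfb W n ε) - n * capacity W) / Real.sqrt n) Filter.atTop ≤ r := by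
  obtain ⟨P, hP, hqP, hq, hD, hD'⟩ := exists_saddle hW hcol (capacityAchievers_nonempty hmin)
  have hq1 : ∑ y, qStar W y = 1 := by rw [hqP]; exact sum_outDist hW hP
  have hν₁ : ∀ x, numin W ≤ nu W x := fun x => ciInf_le (Set.finite_range _).bddBelow x
  have hν₂ : ∀ x, nu W x ≤ numax W := fun x => le_ciSup (Set.finite_range _).bddAbove x
  have hmax : 0 < numax W :=
    hmin.trans_le ((hν₁ (Classical.arbitrary X)).trans (hν₂ (Classical.arbitrary X)))
  have h₁ := Real.sqrt_pos.2 hmin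
  have h₂ := Real.sqrt_pos.2 hmax
  obtain ⟨c, hc⟩ := exists_eventually_le_secondOrder hW hP hqP hq hD' hmax.le hν₂ hε0 hε1
  refine le_of_forall_gt_imp_ge_of_dense fun r' hr' => ?_
  refine Filter.limsup_le_of_le ?_ ?_
  · exact Filter.IsBoundedUnder.isCoboundedUnder_le ⟨c, hc⟩
  · refine eventually_secondOrder_le hW hq hq1 hD h₁ h₂ ?_ ?_ hε0.le hε1 ?_
    · intro x; rw [Real.sq_sqrt hmin.le]; exact hν₁ x
    · intro x; rw [Real.sq_sqrt hmax.le]; exact hν₂ x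
    · rw [← hr]
      exact strictMono_valueFn h₁ h₂ (neg_lt_neg hr')

theorem gcdfInv_nonpos {p : ℝ} (h0 : 0 < p) (hp : p ≤ 1 / 2) : gcdfInv p ≤ 0 := by
  rw [← strictMono_gcdf.le_iff_le, gcdf_gcdfInv h0 (by linarith), gcdf_zero]
  exact hp

theorem gcdfInv_nonneg {p : ℝ} (hp : 1 / 2 ≤ p) (h1 : p < 1) : 0 ≤ gcdfInv p := by
  rw [← strictMono_gcdf.le_iff_le, gcdf_gcdfInv (by linarith) h1, gcdf_zero]
  exact hp

end SecondOrder

/-- Theorem 4 (Impossibility for compound-dispersion channels). -/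
theorem impossibility_compound_dispersion
    {X Y : Type*} [Fintype X] [Fintype Y] [Nonempty X]
    (W : X → Y → ℝ) (hW : IsChannel W) (hcol : NoZeroColumn W)
    (hnumin : 0 < numin W)
    (lam : ℝ) (hlam : lam = Real.sqrt (numin W / numax W)) :
    ∀ ε : ℝ, 0 < ε → ε < 1 →
      (ε ≤ lam / (1 + lam) →
        Filter.limsup (fun n : ℕ =>
            (Real.log (Mfb W n ε) - n * capacity W) / Real.sqrt n) Filter.atTop ≤
          Real.sqrt (numin W) * gcdfInv (1 / (2 * lam) * (ε * (1 + lam)))) ∧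
      (lam / (1 + lam) < ε →
        Filter.limsup (fun n : ℕ =>
            (Real.log (Mfb W n ε) - n * capacity W) / Real.sqrt n) Filter.atTop ≤
          Real.sqrt (numax W) * gcdfInv (1 / 2 * (ε * (1 + lam) + (1 - lam)))) := by
  intro ε hε0 hε1
  have hmax : 0 < numax W := hnumin.trans_le
    ((ciInf_le (Set.finite_range _).bddBelow (Classical.arbitrary X)).trans
      (le_ciSup (Set.finite_range _).bddAbove (Classical.arbitrary X)))
  have h₁ := Real.sqrt_pos.2 hnumin
  have h₂ := Real.sqrt_pos.2 hmax
  rw [Real.sqrt_div hnumin.le] at hlam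
  have hlam0 : 0 < lam := hlam ▸ div_pos h₁ h₂
  have hs : Real.sqrt (numin W) = lam * Real.sqrt (numax W) := by
    rw [hlam]
    field_simp
  constructor
  · intro h
    have hp : 1 / (2 * lam) * (ε * (1 + lam)) ≤ 1 / 2 := by
      rw [le_div_iff₀ (by linarith)] at h
      rw [one_div, ← div_eq_inv_mul, div_le_iff₀ (by positivity)]
      linarith
    have hp0 : 0 < 1 / (2 * lam) * (ε * (1 + lam)) := by positivity
    refine limsup_secondOrder_le hW hcol hnumin hε0 hε1 ?_
    have hg := gcdfInv_nonpos hp0 hp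
    rw [valueFn_of_nonneg h₁ h₂ (by nlinarith), neg_div, mul_div_cancel_left₀ _ h₁.ne', gcdf_neg,
      gcdf_gcdfInv hp0 (by linarith), hs]
    field_simp
    ring
  · intro h
    rw [div_lt_iff₀ (by linarith)] at h
    have hp : 1 / 2 ≤ 1 / 2 * (ε * (1 + lam) + (1 - lam)) := by linarith
    have hp1 : 1 / 2 * (ε * (1 + lam) + (1 - lam)) < 1 := by nlinarith
    refine limsup_secondOrder_le hW hcol hnumin hε0 hε1 ?_
    have hg := gcdfInv_nonneg hp hp1
    rw [valueFn_of_nonpos (by nlinarith), neg_div, mul_div_cancel_left₀ _ h₂.ne', gcdf_neg,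
      gcdf_gcdfInv (by linarith) hp1, hs]
    field_simp
    ring

end Paper
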